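/- arXiv:2405.12771 — 8 statements merged into one kernel-verified Lean document; each statement's English description precedes it below -/
import Mathlib

section
/- Let L be a first-order language and let M and N be L-structures. Then Th_{∀∃}(M) ⊆ Th_{∀∃}(N) if and only if there exists an L-structure M* elementarily equivalent to M together with an existentially closed L-embedding of N into M*. -/
open FirstOrder Language

universe u v w x

/-- Apply existential quantifiers to the last `s` bound variables of a bounded formula. -/
def FirstOrder.Language.BoundedFormula.exsN {L : FirstOrder.Language} {α : Type*} {m : ℕ} :
    ∀ {s : ℕ}, L.BoundedFormula α (m + s) → L.BoundedFormula α m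
  | 0, φ => φ
  | _ + 1, φ => φ.ex.exsN

/-- `Th_{∀∃}(M) ⊆ Th_{∀∃}(N)`: every sentence of the form `∀ x₁ … xₘ ∃ y₁ … yₛ ψ` with `ψ`
quantifier-free that holds in `M` also holds in `N`. -/
def AETheorySub (L : FirstOrder.Language) (M : Type*) (N : Type*)
    [L.Structure M] [L.Structure N] : Prop :=
  ∀ (m s : ℕ) (ψ : L.BoundedFormula Empty (m + s)), ψ.IsQF →
    M ⊨ (ψ.exsN.alls : L.Sentence) → N ⊨ (ψ.exsN.alls : L.Sentence)

/-- An embedding `f : M ↪ N` is existentially closed: every existential formula with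
parameters from `M` that holds in `N` (at the images of the parameters) holds in `M`. -/
def IsECEmbedding {L : FirstOrder.Language} {M N : Type*} [L.Structure M] [L.Structure N]
    (f : M ↪[L] N) : Prop :=
  ∀ (k s : ℕ) (ψ : L.BoundedFormula (Fin k) s), ψ.IsQF → ∀ a : Fin k → M,
    (ψ.exs : L.Formula (Fin k)).Realize (fun i => f (a i)) →
      (ψ.exs : L.Formula (Fin k)).Realize a

namespace AEProof

open FirstOrder.Language.BoundedFormula

theorem realize_exsN {L : FirstOrder.Language} {α : Type*} {A : Type*} [L.Structure A] {m : ℕ}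
    (v : α → A) (xs : Fin m → A) : ∀ {s : ℕ} (φ : L.BoundedFormula α (m + s)),
    φ.exsN.Realize v xs ↔ ∃ ys : Fin s → A, φ.Realize v (Fin.append xs ys)
  | 0, φ => by
    constructor
    · intro h
      refine ⟨Fin.elim0, ?_⟩
      rw [Fin.append_right_nil _ _ rfl]
      exact h
    · rintro ⟨ys, h⟩
      rw [Fin.append_right_nil _ _ rfl] at h
      exact h
  | s + 1, φ => by
    have e : (BoundedFormula.exsN (m := m) (s := s + 1) φ) = φ.ex.exsN (m := m) (s := s) := rfl
    rw [e, realize_exsN]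
    constructor
    · rintro ⟨ys, h⟩
      obtain ⟨a, h⟩ := realize_ex.1 h
      refine ⟨Fin.snoc ys a, ?_⟩
      rw [Fin.append_snoc]
      exact h
    · rintro ⟨ys, h⟩
      refine ⟨Fin.init ys, realize_ex.2 ⟨ys (Fin.last _), ?_⟩⟩
      rw [← Fin.snoc_init_self ys, Fin.append_snoc] at h
      exact h

theorem ae_iff {L : FirstOrder.Language} {A : Type*} [L.Structure A] {m s : ℕ}
    (ψ : L.BoundedFormula Empty (m + s)) :
    A ⊨ (ψ.exsN.alls : L.Sentence) ↔
      ∀ x : Fin m → A, ∃ y : Fin s → A, ψ.Realize default (Fin.append x y) := by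
  rw [Sentence.Realize, realize_alls]
  simp only [realize_exsN]

theorem isQF_toFormula {L : FirstOrder.Language} {α : Type*} {n : ℕ} {φ : L.BoundedFormula α n}
    (h : φ.IsQF) : IsQF φ.toFormula := by
  induction h with
  | falsum => exact IsQF.falsum
  | of_isAtomic h =>
    cases h with
    | equal t₁ t₂ => exact (IsAtomic.equal _ _).isQF
    | rel R ts => exact (IsAtomic.rel _ _).isQF
  | imp _ _ h1 h2 => exact h1.imp h2

theorem isQF_restrict {L : FirstOrder.Language} {α β : Type*} [DecidableEq α] {n : ℕ}
    {φ : L.BoundedFormula α n}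
    (h : φ.IsQF) (f : φ.freeVarFinset → β) : (φ.restrictFreeVar f).IsQF := by
  induction h with
  | falsum => exact IsQF.falsum
  | of_isAtomic h =>
    cases h with
    | equal t₁ t₂ => exact (IsAtomic.equal _ _).isQF
    | rel R ts => exact (IsAtomic.rel _ _).isQF
  | imp _ _ h1 h2 => exact (h1 _).imp (h2 _)

theorem realize_relabel0 {L : FirstOrder.Language} {α β : Type*} {C : Type*} [L.Structure C]
    {n : ℕ} (θ : L.Formula α) (g : α → β ⊕ Fin n) (v : β → C) (xs : Fin n → C) :
    (show L.BoundedFormula β n from BoundedFormula.relabel g θ).Realize v xs ↔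
      θ.Realize (Sum.elim v xs ∘ g) := by
  refine (realize_relabel (φ := θ) (g := g) (xs := xs)).trans ?_
  rw [Formula.Realize]
  exact iff_of_eq (congrArg₂ _ rfl (Subsingleton.elim _ _))

theorem key_aux {L : FirstOrder.Language} {C : Type*} [L.Structure C] {m s : ℕ}
    (θ : L.Formula (Fin m ⊕ Fin s)) (x : Fin m → C) (y : Fin s → C) :
    (show L.BoundedFormula Empty (m + s) from
      BoundedFormula.relabel (Sum.inr ∘ finSumFinEquiv) θ).Realize default (Fin.append x y) ↔
        θ.Realize (Sum.elim x y) := by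
  refine (realize_relabel0 _ _ _ _).trans ?_
  refine iff_of_eq (congrArg _ ?_)
  funext i
  rcases i with i | i
  · exact Fin.append_left x y i
  · exact Fin.append_right x y i

theorem key_aux2 {L : FirstOrder.Language} {C : Type*} [L.Structure C] {m s : ℕ}
    (ψ : L.BoundedFormula Empty (m + s)) (x : Fin m → C) (y : Fin s → C) :
    (show L.BoundedFormula (Fin m) s from
      BoundedFormula.relabel (Sum.elim Empty.elim finSumFinEquiv.symm) ψ.toFormula).Realize x y ↔
        ψ.Realize default (Fin.append x y) := by
  refine (realize_relabel0 _ _ _ _).trans ?_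
  refine (realize_toFormula ψ _).trans ?_
  refine iff_of_eq (congrArg₂ _ (Subsingleton.elim _ _) ?_)
  funext i
  refine Fin.addCases (fun i => ?_) (fun i => ?_) i <;> simp

theorem key_fin {L : FirstOrder.Language} {A B : Type*} [L.Structure A] [L.Structure B]
    (H : AETheorySub L A B) {m s : ℕ} (θ : L.Formula (Fin m ⊕ Fin s)) (hθ : IsQF θ)
    (h : ∀ v : Fin m → A, ∃ y : Fin s → A, θ.Realize (Sum.elim v y)) :
    ∀ v : Fin m → B, ∃ y : Fin s → B, θ.Realize (Sum.elim v y) := by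
  have h2 := H m s _ (hθ.relabel (Sum.inr ∘ finSumFinEquiv))
  have h3 := (ae_iff _).1 (h2 ((ae_iff _).2 fun x => (h x).imp fun y hy => (key_aux θ x y).2 hy))
  exact fun x => (h3 x).imp fun y hy => (key_aux θ x y).1 hy

theorem key_gen {L : FirstOrder.Language} {A B : Type*} [L.Structure A] [L.Structure B]
    [Nonempty A] [Nonempty B]
    (H : AETheorySub L A B) {α I : Type*} (θ : L.Formula (α ⊕ I)) (hθ : IsQF θ)
    (h : ∀ v : α → A, ∃ y : I → A, θ.Realize (Sum.elim v y)) :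
    ∀ v : α → B, ∃ y : I → B, θ.Realize (Sum.elim v y) := by
  classical
  set F := BoundedFormula.freeVarFinset θ with hF
  have f1 : Finite {a : α // Sum.inl a ∈ F} :=
    Finite.of_injective (fun a => (⟨Sum.inl a.1, a.2⟩ : F)) (by
      intro a b hab; simpa [Subtype.ext_iff] using hab)
  have f2 : Finite {a : I // Sum.inr a ∈ F} :=
    Finite.of_injective (fun a => (⟨Sum.inr a.1, a.2⟩ : F)) (by
      intro a b hab; simpa [Subtype.ext_iff] using hab)
  obtain ⟨m, ⟨e1⟩⟩ := Finite.exists_equiv_fin {a : α // Sum.inl a ∈ F}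
  obtain ⟨s, ⟨e2⟩⟩ := Finite.exists_equiv_fin {a : I // Sum.inr a ∈ F}
  let g : F → Fin m ⊕ Fin s := fun x => match x with
    | ⟨Sum.inl a, ha⟩ => Sum.inl (e1 ⟨a, ha⟩)
    | ⟨Sum.inr a, ha⟩ => Sum.inr (e2 ⟨a, ha⟩)
  have h1 := key_fin H (BoundedFormula.restrictFreeVar θ g) (isQF_restrict hθ g) (by
    intro v
    obtain ⟨a0⟩ := ‹Nonempty A›
    obtain ⟨y, hy⟩ := h (fun a => if ha : Sum.inl a ∈ F then v (e1 ⟨a, ha⟩) else a0)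
    refine ⟨fun i => y (e2.symm i).1, ?_⟩
    refine (realize_restrictFreeVar _ ?_).2 hy
    rintro ⟨a | a, ha⟩
    · have ha' : Sum.inl a ∈ F := ha
      simp [g, ha']
    · simp [g])
  intro v
  obtain ⟨b0⟩ := ‹Nonempty B›
  obtain ⟨y, hy⟩ := h1 (fun i => v (e1.symm i).1)
  refine ⟨fun a => if ha : Sum.inr a ∈ F then y (e2 ⟨a, ha⟩) else b0, ?_⟩
  refine (realize_restrictFreeVar _ ?_).1 hy
  rintro ⟨a | a, ha⟩
  · simp [g]
  · have ha' : Sum.inr a ∈ F := ha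
    simp [g, ha']

theorem isQF_foldr {L : FirstOrder.Language} {α : Type*} {n : ℕ}
    (l : List (L.BoundedFormula α n)) (h : ∀ φ ∈ l, φ.IsQF) : (l.foldr (· ⊔ ·) ⊥).IsQF := by
  induction l with
  | nil => exact isQF_bot
  | cons a l ih =>
    exact (h a (by simp)).sup (ih fun φ hφ => h φ (by simp [hφ]))

theorem fin_sat {L : FirstOrder.Language} {A B : Type*} [L.Structure A] [L.Structure B]
    [Nonempty A] [Nonempty B] (H : AETheorySub L A B)
    (S : Finset {θ : L.Formula (B ⊕ ℕ) // IsQF θ ∧ ∀ y : ℕ → B, θ.Realize (Sum.elim id y)}) :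
    ∃ v : B → A, ∀ θ ∈ S, ∀ y : ℕ → A, θ.1.Realize (Sum.elim v y) := by
  classical
  by_contra! hc
  let r : ∀ θ : {θ : L.Formula (B ⊕ ℕ) // IsQF θ ∧ ∀ y : ℕ → B, θ.Realize (Sum.elim id y)},
      L.Formula (B ⊕ ({θ : L.Formula (B ⊕ ℕ) // IsQF θ ∧
        ∀ y : ℕ → B, θ.Realize (Sum.elim id y)} × ℕ)) :=
    fun θ => (Formula.relabel (Sum.map id (fun n => (θ, n))) θ.1).not
  have hr : ∀ θ {C : Type _} [L.Structure C] (v : B → C) y,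
      (r θ).Realize (Sum.elim v y) ↔ ¬ θ.1.Realize (Sum.elim v (fun n => y (θ, n))) := by
    intro θ C _ v y
    rw [Formula.realize_not, Formula.realize_relabel, Sum.elim_comp_map]
    rfl
  have hr2 : ∀ θ {C : Type _} [L.Structure C] (v : B → C) y,
      (r θ).Realize (Sum.elim v y) ↔ ¬ θ.1.Realize (Sum.elim v (fun n => y (θ, n))) := by
    intro θ C _ v y
    rw [Formula.realize_not, Formula.realize_relabel, Sum.elim_comp_map]
    rfl
  have hq : IsQF ((S.toList.map r).foldr (· ⊔ ·) ⊥) := by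
    apply isQF_foldr
    intro φ hφ
    obtain ⟨θ, -, rfl⟩ := List.mem_map.1 hφ
    exact (θ.2.1.relabel _).not
  obtain ⟨y, hy⟩ := key_gen H _ hq (by
    intro v
    obtain ⟨θ, hθ, y, hy⟩ := hc v
    refine ⟨fun p => y p.2, ?_⟩
    refine (realize_foldr_sup _ _ _).2 ⟨r θ, ?_, ?_⟩
    · exact List.mem_map.2 ⟨θ, by simpa using hθ, rfl⟩
    · exact (hr θ v _).2 hy) id
  obtain ⟨φ, hφ, hy⟩ := (realize_foldr_sup _ _ _).1 hy
  obtain ⟨θ, -, rfl⟩ := List.mem_map.1 hφ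
  exact (hr2 θ id y).1 hy (θ.2.2 _)

/-- Build the EC embedding from transfer of universal formulas. -/
theorem build {L : FirstOrder.Language} {B C : Type*} [L.Structure B] [L.Structure C]
    [Nonempty C] (f : B → C)
    (hf : ∀ θ : L.Formula (B ⊕ ℕ), IsQF θ → (∀ y : ℕ → B, θ.Realize (Sum.elim id y)) →
      ∀ y : ℕ → C, θ.Realize (Sum.elim f y)) :
    ∃ g : B ↪[L] C, IsECEmbedding g := by
  obtain ⟨c0⟩ := ‹Nonempty C›
  have eqt : ∀ t₁ t₂ : L.Term (B ⊕ ℕ), IsQF (t₁.equal t₂) :=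
    fun t₁ t₂ => (IsAtomic.equal _ _).isQF
  refine ⟨⟨⟨f, ?_⟩, ?_, ?_⟩, ?_⟩
  · intro a b hab
    by_contra hne
    have := hf (Term.equal (Term.var (Sum.inl a)) (Term.var (Sum.inl b))).not (eqt _ _).not
      (by intro y; simpa [Formula.realize_not, Formula.realize_equal] using hne) (fun _ => c0)
    simp [Formula.realize_not, Formula.realize_equal] at this
    exact this hab
  · intro n F x
    have := hf (Term.equal (Term.var (Sum.inl (Structure.funMap F x)))
      (Term.func F (fun i => Term.var (Sum.inl (x i))))) (eqt _ _)
      (by intro y; simp [Formula.realize_equal]) (fun _ => c0)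
    simpa [Formula.realize_equal, Function.comp_def] using this
  · intro n R x
    have hq : IsQF (R.formula (fun i => (Term.var (Sum.inl (x i)) : L.Term (B ⊕ ℕ)))) :=
      (IsAtomic.rel _ _).isQF
    constructor
    · intro h
      by_contra hne
      have := hf _ hq.not
        (by intro y; simpa [Formula.realize_not, Formula.realize_rel] using hne) (fun _ => c0)
      have := Formula.realize_not.1 this
      rw [Formula.realize_rel] at this
      exact this h
    · intro h
      have := hf _ hq
        (by intro y; simpa [Formula.realize_rel] using h) (fun _ => c0)
      rw [Formula.realize_rel] at this
      exact this
  · intro k s ψ hψ a h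
    by_contra hne
    rw [realize_exs] at h hne
    obtain ⟨xs, hxs⟩ := h
    have := hf (Formula.relabel (Sum.map a (fun i : Fin s => (i : ℕ))) ψ.toFormula).not
      ((isQF_toFormula hψ).relabel _).not (by
        intro y
        rw [Formula.realize_not, Formula.realize_relabel, Sum.elim_comp_map, realize_toFormula]
        intro hh
        exact hne ⟨_, hh⟩) (fun n => if h : n < s then xs ⟨n, h⟩ else c0)
    rw [Formula.realize_not, Formula.realize_relabel, Sum.elim_comp_map, realize_toFormula] at this
    apply this
    have e : (Sum.elim (f ∘ a) ((fun n => if h : n < s then xs ⟨n, h⟩ else c0) ∘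
        fun i : Fin s => (i : ℕ)) ∘ Sum.inr) = xs := by
      funext i
      simp
    rw [e]
    exact hxs

theorem nonempty_right {L : FirstOrder.Language} {A B : Type*} [L.Structure A] [L.Structure B]
    [Nonempty A] (H : AETheorySub L A B) : Nonempty B := by
  obtain ⟨y, -⟩ := key_fin H (m := 0) (s := 1) ⊤ IsQF.top
    (fun v => ⟨fun _ => Classical.arbitrary A, by simp⟩) Fin.elim0
  exact ⟨y 0⟩

theorem empty_right {L : FirstOrder.Language} {A B : Type*} [L.Structure A] [L.Structure B]
    [IsEmpty A] (H : AETheorySub L A B) : IsEmpty B := by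
  refine ⟨fun b => ?_⟩
  obtain ⟨y, hy⟩ := key_fin H (m := 1) (s := 0) ⊥ isQF_bot (fun v => isEmptyElim (v 0)) (fun _ => b)
  exact hy

theorem qf_transfer {L : FirstOrder.Language} {A B : Type*} [L.Structure A] [L.Structure B]
    (H : AETheorySub L A B) (θ : L.Formula (Fin 0 ⊕ Fin 0)) (hθ : IsQF θ) (v : Fin 0 ⊕ Fin 0 → A)
    (w : Fin 0 ⊕ Fin 0 → B) : θ.Realize v ↔ θ.Realize w := by
  have : ∀ θ : L.Formula (Fin 0 ⊕ Fin 0), IsQF θ → θ.Realize v → θ.Realize w := by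
    intro θ hθ h
    obtain ⟨y, hy⟩ := key_fin H θ hθ
      (fun x => ⟨Fin.elim0, by convert h using 1; exact Subsingleton.elim _ _⟩) Fin.elim0
    convert hy using 1; exact Subsingleton.elim _ _
  refine ⟨this θ hθ, fun h => ?_⟩
  by_contra hn
  exact Formula.realize_not.1 (this θ.not hθ.not (Formula.realize_not.2 hn)) h

theorem build_empty {L : FirstOrder.Language} {A B : Type*} [L.Structure A] [L.Structure B]
    [IsEmpty A] [IsEmpty B] (H : AETheorySub L A B) :
    ∃ g : B ↪[L] A, IsECEmbedding g := by
  refine ⟨⟨⟨isEmptyElim, fun a => isEmptyElim a⟩, fun F x => isEmptyElim (Structure.funMap F x), ?_⟩,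
    ?_⟩
  · intro n R x
    cases n with
    | succ n => exact isEmptyElim (x 0)
    | zero =>
      have := qf_transfer H (R.formula Fin.elim0) (IsAtomic.rel _ _).isQF
        (isEmptyElim) (isEmptyElim)
      rw [Formula.realize_rel, Formula.realize_rel] at this
      convert this using 1 <;> refine iff_of_eq ?_ <;> congr 1 <;> exact Subsingleton.elim _ _
  · intro k s ψ hψ a h
    cases k with
    | succ k => exact isEmptyElim (a 0)
    | zero =>
      rw [realize_exs] at h ⊢
      obtain ⟨xs, h⟩ := h
      cases s with
      | succ s => exact isEmptyElim (xs 0)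
      | zero =>
        refine ⟨Fin.elim0, ?_⟩
        have := (qf_transfer H _ (isQF_toFormula hψ) (isEmptyElim) (isEmptyElim)).1
          ((realize_toFormula _ _).2 (by
            convert h using 1 <;> exact Subsingleton.elim _ _))
        rw [realize_toFormula] at this
        convert this using 1 <;> exact Subsingleton.elim _ _

end AEProof

/-- `Th_{∀∃}(M) ⊆ Th_{∀∃}(N)` iff there is `M* ≡ M` together with an
existentially closed embedding of `N` into `M*`. -/
theorem stmt0 {L : FirstOrder.Language.{u, v}} {M : Type w} {N : Type x}
    [L.Structure M] [L.Structure N] :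
    AETheorySub L M N ↔
      ∃ (M' : Type (max u v w x)) (_ : L.Structure M'),
        (M ≅[L] M') ∧ ∃ f : N ↪[L] M', IsECEmbedding f := by
  constructor
  · intro H
    rcases isEmpty_or_nonempty M with hM | hM
    · have hN := AEProof.empty_right H
      let E : M ≃ ULift.{max u v x} M := Equiv.ulift.symm
      letI : L.Structure (ULift.{max u v x} M) := E.inducedStructure
      have e : M ≅[L] ULift.{max u v x} M :=
        (E.inducedStructureEquiv (L := L)).toElementaryEmbedding.elementarilyEquivalent
      refine ⟨ULift.{max u v x} M, inferInstance, e, ?_⟩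
      refine AEProof.build_empty ?_
      intro m s ψ hψ h
      exact H m s ψ hψ ((e.realize_sentence _).2 h)
    · have hN := AEProof.nonempty_right H
      let U := {θ : L.Formula (N ⊕ ℕ) // BoundedFormula.IsQF θ ∧
        ∀ y : ℕ → N, θ.Realize (Sum.elim id y)}
      choose v hv using fun S : Finset U => AEProof.fin_sat H S
      let 𝓤 : Ultrafilter (Finset U) := Ultrafilter.of Filter.atTop
      let P := (𝓤 : Filter (Finset U)).Product (fun _ => M)
      refine ⟨P, Ultraproduct.structure, ?_, ?_⟩
      · rw [elementarilyEquivalent_iff]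
        intro φ
        refine Iff.trans ?_ (Ultraproduct.sentence_realize φ).symm
        simp
      · have : Nonempty P := Ultraproduct.Product.instNonempty
        refine AEProof.build (fun n => (Quotient.mk _ (fun S => v S n) : P)) ?_
        intro θ hθ h y
        choose z hz using fun n => Quotient.exists_rep (y n)
        have hl := (Ultraproduct.realize_formula_cast (u := 𝓤) (M := fun _ => M) θ
          (Sum.elim (fun n S => v S n) z)).2 (by
            have h1 : ∀ᶠ S in (𝓤 : Filter (Finset U)), {(⟨θ, hθ, h⟩ : U)} ≤ S :=
              (Ultrafilter.of_le _) (Filter.eventually_ge_atTop _)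
            filter_upwards [h1] with S hS
            have := hv S ⟨θ, hθ, h⟩ (hS (by simp)) (fun n => z n S)
            convert this using 1
            funext i
            rcases i with i | i <;> rfl)
        refine Eq.mp (congrArg (fun w : N ⊕ ℕ → P => θ.Realize w) ?_) hl
        funext i
        rcases i with i | i
        · rfl
        · exact hz i
  · rintro ⟨M', _, e, f, hf⟩ m s ψ hψ h
    have h' := (AEProof.ae_iff _).1 ((e.realize_sentence _).1 h)
    rw [AEProof.ae_iff]
    intro x
    let g : Empty ⊕ Fin (m + s) → Fin m ⊕ Fin s :=
      Sum.elim Empty.elim finSumFinEquiv.symm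
    let χ : L.BoundedFormula (Fin m) s := BoundedFormula.relabel g ψ.toFormula
    have hχ : χ.IsQF := (AEProof.isQF_toFormula hψ).relabel g
    have := hf m s χ hχ x (BoundedFormula.realize_exs.2
      ((h' (fun i => f (x i))).imp fun y hy => (AEProof.key_aux2 ψ _ _).2 hy))
    exact (BoundedFormula.realize_exs.1 this).imp fun y hy => (AEProof.key_aux2 ψ _ _).1 hy
end

section
/- Let L be a first-order language, n ∈ ℕ, and let M and N be L-structures. Then Th_{∀ₙ∃}(M) ⊆ Th_{∀ₙ∃}(N) if and only if: there exists an elementary extension N* of N such that for every n-tuple (b₁,…,bₙ) of elements of N* there exist an elementary extension M_b of M and an L-embedding f : M_b → N* such that b₁,…,bₙ all lie in the image of f. -/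
open FirstOrder Language

universe u v w x

/-- `Th_{∀ₙ∃}(M) ⊆ Th_{∀ₙ∃}(N)`: every sentence of the form `∀ x₁ … xₙ ∃ y₁ … yₛ ψ` with `ψ`
quantifier-free that holds in `M` also holds in `N`. -/
def AnETheorySub (L : FirstOrder.Language) (n : ℕ) (M : Type*) (N : Type*)
    [L.Structure M] [L.Structure N] : Prop :=
  ∀ (s : ℕ) (ψ : L.BoundedFormula Empty (n + s)), ψ.IsQF →
    M ⊨ (ψ.exsN.alls : L.Sentence) → N ⊨ (ψ.exsN.alls : L.Sentence)


namespace Stmt2Aux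
open FirstOrder.Language

theorem realize_exsN {L : FirstOrder.Language} {α : Type*} {K : Type*} [L.Structure K] {m : ℕ} :
    ∀ {s : ℕ} (φ : L.BoundedFormula α (m + s)) (v : α → K) (xs : Fin m → K),
      φ.exsN.Realize v xs ↔ ∃ ys : Fin s → K, φ.Realize v (Fin.append xs ys)
  | 0, φ, v, xs => by
    constructor
    · intro h
      refine ⟨Fin.elim0, ?_⟩
      rw [Fin.append_elim0]
      exact h
    · rintro ⟨ys, h⟩
      have : ys = Fin.elim0 := Subsingleton.elim _ _
      subst this
      rw [Fin.append_elim0] at h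
      exact h
  | s + 1, φ, v, xs => by
    rw [BoundedFormula.exsN, realize_exsN φ.ex v xs]
    constructor
    · rintro ⟨ys, h⟩
      obtain ⟨a, ha⟩ := BoundedFormula.realize_ex.1 h
      refine ⟨Fin.snoc ys a, ?_⟩
      rw [Fin.append_snoc]
      exact ha
    · rintro ⟨ys, h⟩
      refine ⟨Fin.init ys, BoundedFormula.realize_ex.2 ⟨ys (Fin.last s), ?_⟩⟩
      rw [← Fin.append_snoc, Fin.snoc_init_self]
      exact h

theorem realize_alls_exsN {L : FirstOrder.Language} {K : Type*} [L.Structure K] {n s : ℕ}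
    (ψ : L.BoundedFormula Empty (n + s)) :
    K ⊨ (ψ.exsN.alls : L.Sentence) ↔ ∀ a : Fin n → K, ψ.exsN.Realize default a := by
  exact BoundedFormula.realize_alls

theorem qf_realize {L : FirstOrder.Language} {α : Type*} {A B : Type*} [L.Structure A]
    [L.Structure B] (f : A ↪[L] B) {m : ℕ} {φ : L.BoundedFormula α m} (h : φ.IsQF)
    (v : α → A) (xs : Fin m → A) : φ.Realize (f ∘ v) (f ∘ xs) ↔ φ.Realize v xs := by
  induction h with
  | falsum => rfl
  | of_isAtomic h =>
    cases h with
    | equal t₁ t₂ =>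
      rw [BoundedFormula.realize_bdEqual, BoundedFormula.realize_bdEqual, ← Sum.comp_elim,
        HomClass.realize_term, HomClass.realize_term]
      exact f.injective.eq_iff
    | rel R ts =>
      rw [BoundedFormula.realize_rel, BoundedFormula.realize_rel, ← Sum.comp_elim, ← f.map_rel]
      simp only [HomClass.realize_term]
      rfl
  | imp _ _ ih1 ih2 => simp [BoundedFormula.realize_imp, ih1, ih2]

theorem toFormula_qf {L : FirstOrder.Language} {α : Type*} {m : ℕ} {φ : L.BoundedFormula α m}
    (h : φ.IsQF) : φ.toFormula.IsQF := by
  induction h with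
  | falsum => exact BoundedFormula.isQF_bot
  | of_isAtomic h =>
    cases h with
    | equal t₁ t₂ => exact (BoundedFormula.IsAtomic.equal _ _).isQF
    | rel R ts => exact (BoundedFormula.IsAtomic.rel _ _).isQF
  | imp _ _ ih1 ih2 => exact ih1.imp ih2

/-- turn free variables into bound ones -/
theorem exists_bd {L : FirstOrder.Language} {α : Type*} {m : ℕ} (φ : L.Formula α)
    (h : BoundedFormula.IsQF φ) (g : α → Fin m) :
    ∃ ψ : L.BoundedFormula Empty m, ψ.IsQF ∧
      ∀ (K : Type w) [L.Structure K] (xs : Fin m → K),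
        ψ.Realize default xs ↔ φ.Realize (xs ∘ g) := by
  refine ⟨BoundedFormula.relabel (fun a => Sum.inr (g a) : α → Empty ⊕ Fin m) φ, h.relabel _, ?_⟩
  intro K _ xs
  have := @BoundedFormula.realize_relabel L K _ α Empty m 0 φ (fun a => Sum.inr (g a)) default xs
  refine this.trans ?_
  rw [Formula.Realize]
  exact iff_of_eq (congr rfl (funext finZeroElim))

theorem realize_congr {L : FirstOrder.Language} {α : Type*} {K : Type*} [L.Structure K]
    [DecidableEq α] (φ : L.Formula α) (v v' : α → K)
    (h : ∀ a ∈ BoundedFormula.freeVarFinset φ, v a = v' a) : φ.Realize v ↔ φ.Realize v' := by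
  have h1 := @BoundedFormula.realize_restrictFreeVar L K _ α α _ 0 φ Subtype.val v default v
    (fun _ => rfl)
  have h2 := @BoundedFormula.realize_restrictFreeVar L K _ α α _ 0 φ Subtype.val v default v'
    (fun a => h a a.2)
  exact h1.symm.trans h2

theorem exists_or {L : FirstOrder.Language} {n s₁ s₂ : ℕ}
    (ψ₁ : L.BoundedFormula Empty (n + s₁)) (ψ₂ : L.BoundedFormula Empty (n + s₂))
    (h₁ : ψ₁.IsQF) (h₂ : ψ₂.IsQF) :
    ∃ ψ : L.BoundedFormula Empty (n + (s₁ + s₂)), ψ.IsQF ∧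
      ∀ (K : Type w) [L.Structure K] [Nonempty K] (a : Fin n → K),
        ψ.exsN.Realize default a ↔ ψ₁.exsN.Realize default a ∨ ψ₂.exsN.Realize default a := by
  obtain ⟨θ₁, q₁, r₁⟩ := exists_bd ψ₁.toFormula (toFormula_qf h₁)
    (Sum.elim Empty.elim (Fin.addCases (Fin.castAdd (s₁ + s₂))
      (fun j => Fin.natAdd n (Fin.castAdd s₂ j))) : Empty ⊕ Fin (n + s₁) → Fin (n + (s₁ + s₂)))
  obtain ⟨θ₂, q₂, r₂⟩ := exists_bd ψ₂.toFormula (toFormula_qf h₂)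
    (Sum.elim Empty.elim (Fin.addCases (Fin.castAdd (s₁ + s₂))
      (fun j => Fin.natAdd n (Fin.natAdd s₁ j))) : Empty ⊕ Fin (n + s₂) → Fin (n + (s₁ + s₂)))
  refine ⟨θ₁ ⊔ θ₂, q₁.sup q₂, ?_⟩
  intro K _ _ a
  have e₁ : ∀ (y₁ : Fin s₁ → K) (y₂ : Fin s₂ → K),
      θ₁.Realize default (Fin.append a (Fin.append y₁ y₂)) ↔
      ψ₁.Realize default (Fin.append a y₁) := by
    intro y₁ y₂
    rw [r₁, BoundedFormula.realize_toFormula]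
    refine iff_of_eq (congr (congr rfl (Subsingleton.elim _ _)) ?_)
    funext i
    refine Fin.addCases (fun i => ?_) (fun i => ?_) i <;> simp
  have e₂ : ∀ (y₁ : Fin s₁ → K) (y₂ : Fin s₂ → K),
      θ₂.Realize default (Fin.append a (Fin.append y₁ y₂)) ↔
      ψ₂.Realize default (Fin.append a y₂) := by
    intro y₁ y₂
    rw [r₂, BoundedFormula.realize_toFormula]
    refine iff_of_eq (congr (congr rfl (Subsingleton.elim _ _)) ?_)
    funext i
    refine Fin.addCases (fun i => ?_) (fun i => ?_) i <;> simp
  rw [realize_exsN, realize_exsN, realize_exsN]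
  constructor
  · rintro ⟨ys, h⟩
    have hy : ys = Fin.append (fun i => ys (Fin.castAdd s₂ i)) (fun i => ys (Fin.natAdd s₁ i)) :=
      (Fin.append_castAdd_natAdd (f := ys)).symm
    rw [hy, BoundedFormula.realize_sup, e₁, e₂] at h
    exact h.imp (fun h => ⟨_, h⟩) (fun h => ⟨_, h⟩)
  · rintro (⟨y, h⟩ | ⟨y, h⟩)
    · refine ⟨Fin.append y (fun _ => Classical.arbitrary K), ?_⟩
      rw [BoundedFormula.realize_sup, e₁]
      exact Or.inl h
    · refine ⟨Fin.append (fun _ => Classical.arbitrary K) y, ?_⟩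
      rw [BoundedFormula.realize_sup, e₂]
      exact Or.inr h

theorem compact {L : FirstOrder.Language.{u, v}} {α : Type w} (Γ : Set (L.Formula α))
    (h : ∀ Γ₀ : Finset (L.Formula α), (Γ₀ : Set (L.Formula α)) ⊆ Γ →
      ∃ (A : Type x) (_ : L.Structure A) (_ : Nonempty A) (v : α → A), ∀ φ ∈ Γ₀, φ.Realize v) :
    ∃ (A : Type (max u v w)) (_ : L.Structure A) (_ : Nonempty A) (v : α → A),
      ∀ φ ∈ Γ, φ.Realize v := by
  classical
  have hs : Theory.IsSatisfiable (Formula.equivSentence '' Γ : L[[α]].Theory) := by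
    rw [Theory.isSatisfiable_iff_isFinitelySatisfiable]
    intro T₀ hT₀
    obtain ⟨A, _, _, v, hv⟩ := h (T₀.image Formula.equivSentence.symm) (by
      intro φ hφ
      simp only [Finset.coe_image, Set.mem_image] at hφ
      obtain ⟨σ, hσ, rfl⟩ := hφ
      obtain ⟨φ, hφ, rfl⟩ := hT₀ hσ
      simpa using hφ)
    let : (constantsOn α).Structure A := constantsOn.structure v
    have : A ⊨ (T₀ : L[[α]].Theory) := by
      refine ⟨fun σ hσ => ?_⟩
      exact (Formula.realize_equivSentence_symm A σ v).1 (hv _ (Finset.mem_image_of_mem _ hσ))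
    exact Theory.Model.isSatisfiable A
  obtain ⟨B⟩ := hs
  let := (L.lhomWithConstants α).reduct B
  refine ⟨B, inferInstance, inferInstance, fun a => (L.con a : B), fun φ hφ => ?_⟩
  rw [← Formula.realize_equivSentence]
  exact B.is_model.realize_of_mem _ ⟨φ, hφ, rfl⟩

theorem step1_fin {L : FirstOrder.Language.{u, v}} {M A : Type w} [L.Structure M]
    [L.Structure A] [Nonempty M] [Nonempty A] {n : ℕ} (b : Fin n → A)
    (F : Finset (L.Formula (M ⊕ Fin n)))
    (hF : ∀ φ ∈ F, (∀ a : Fin n → M, φ.Realize (Sum.elim id a)) ∨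
      ∃ (s : ℕ) (ψ : L.BoundedFormula Empty (n + s)), ψ.IsQF ∧ ¬ ψ.exsN.Realize default b ∧
        ∀ a : Fin n → M, ¬ φ.Realize (Sum.elim id a) → ψ.exsN.Realize default a) :
    ∃ (s : ℕ) (ψ : L.BoundedFormula Empty (n + s)), ψ.IsQF ∧ ¬ ψ.exsN.Realize default b ∧
        ∀ a : Fin n → M, (∃ φ ∈ F, ¬ φ.Realize (Sum.elim id a)) → ψ.exsN.Realize default a := by
  classical
  induction F using Finset.induction_on with
  | empty =>
    exact ⟨0, ⊥, BoundedFormula.isQF_bot, fun h => h, fun a h => by simp at h⟩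
  | insert φ F hφ ih =>
    obtain ⟨s, ψ, q, nb, hψ⟩ := ih (fun χ hχ => hF χ (Finset.mem_insert_of_mem hχ))
    rcases hF φ (Finset.mem_insert_self _ _) with h | ⟨s', ψ', q', nb', hψ'⟩
    · refine ⟨s, ψ, q, nb, fun a ⟨χ, hχ, hr⟩ => hψ a ?_⟩
      rcases Finset.mem_insert.1 hχ with rfl | hχ
      · exact absurd (h a) hr
      · exact ⟨χ, hχ, hr⟩
    · obtain ⟨θ, qθ, hθ⟩ := exists_or ψ ψ' q q'
      refine ⟨_, θ, qθ, ?_, fun a ⟨χ, hχ, hr⟩ => ?_⟩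
      · rw [hθ]
        exact not_or.2 ⟨nb, nb'⟩
      · rw [hθ]
        rcases Finset.mem_insert.1 hχ with rfl | hχ
        · exact Or.inr (hψ' a hr)
        · exact Or.inl (hψ a ⟨χ, hχ, hr⟩)

/-- An elementary extension of `M` with a tuple whose existential type is contained in
that of `b`. -/
theorem step1 {L : FirstOrder.Language.{u, v}} {M A : Type (max u v w)} [L.Structure M]
    [L.Structure A] [Nonempty M] [Nonempty A] {n : ℕ} (hMA : AnETheorySub L n M A)
    (b : Fin n → A) :
    ∃ (B : Type (max u v w)) (_ : L.Structure B) (_ : Nonempty B) (_ : M ↪ₑ[L] B)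
      (c : Fin n → B), ∀ (s : ℕ) (ψ : L.BoundedFormula Empty (n + s)), ψ.IsQF →
        ψ.exsN.Realize default c → ψ.exsN.Realize default b := by
  classical
  let g : Empty ⊕ Fin n → M ⊕ Fin n := Sum.elim Empty.elim Sum.inr
  let Γ₁ : Set (L.Formula (M ⊕ Fin n)) :=
    {χ | ∃ φ : L.Formula M, φ.Realize (id : M → M) ∧ χ = φ.relabel Sum.inl}
  let Γ₂ : Set (L.Formula (M ⊕ Fin n)) :=
    {χ | ∃ (s : ℕ) (ψ : L.BoundedFormula Empty (n + s)), ψ.IsQF ∧ ¬ ψ.exsN.Realize default b ∧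
      χ = Formula.not (ψ.exsN.toFormula.relabel g)}
  have hg : ∀ {K : Type (max u v w)} [L.Structure K] (v : M ⊕ Fin n → K)
      (φ : L.BoundedFormula Empty n),
      (φ.toFormula.relabel g).Realize v ↔ φ.Realize default (v ∘ Sum.inr) := by
    intro K _ v φ
    rw [Formula.realize_relabel, BoundedFormula.realize_toFormula]
    exact iff_of_eq (congr (congr rfl (Subsingleton.elim _ _)) rfl)
  obtain ⟨B, i1, i2, v, hv⟩ := compact (Γ₁ ∪ Γ₂) (by
    intro F hF
    obtain ⟨s, ψ, q, nb, hψ⟩ := step1_fin b F (by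
      intro φ hφ
      rcases hF hφ with ⟨χ, hχ, rfl⟩ | ⟨s, ψ, q, nb, rfl⟩
      · left
        intro a
        rw [Formula.realize_relabel]
        exact hχ
      · right
        refine ⟨s, ψ, q, nb, fun a ha => ?_⟩
        rw [Formula.realize_not, not_not, hg] at ha
        exact ha)
    by_contra hcon
    refine nb ((realize_alls_exsN ψ).1 (hMA s ψ q ((realize_alls_exsN ψ).2 fun a => hψ a ?_)) b)
    by_contra hcon'
    push Not at hcon'
    exact hcon ⟨M, inferInstance, inferInstance, Sum.elim id a, hcon'⟩)
  refine ⟨B, i1, i2, ⟨v ∘ Sum.inl, ?_⟩, v ∘ Sum.inr, ?_⟩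
  · have key : ∀ φ : L.Formula M, φ.Realize (id : M → M) → φ.Realize (v ∘ Sum.inl) := by
      intro φ hφ
      have := hv _ (Or.inl ⟨φ, hφ, rfl⟩)
      rwa [Formula.realize_relabel] at this
    intro k φ x
    have key2 : φ.Realize x → φ.Realize ((v ∘ Sum.inl) ∘ x) := by
      intro h
      have := key (φ.relabel x) (Formula.realize_relabel.2 h)
      exact Formula.realize_relabel.1 this
    have key3 : ¬ φ.Realize x → ¬ φ.Realize ((v ∘ Sum.inl) ∘ x) := by
      intro h
      have := key (Formula.not (φ.relabel x)) (by
        rw [Formula.realize_not, Formula.realize_relabel]; exact h)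
      rw [Formula.realize_not, Formula.realize_relabel] at this
      exact this
    exact ⟨fun h => by_contra fun h' => key3 h' h, key2⟩
  · intro s ψ q hc
    by_contra nb
    have := hv _ (Or.inr ⟨s, ψ, q, nb, rfl⟩)
    rw [Formula.realize_not, hg] at this
    exact this hc

theorem exists_retract {B : Type*} [Nonempty B] (S : Finset B) :
    ∃ (s : ℕ) (e : B → Fin s) (r : Fin s → B), ∀ m ∈ S, r (e m) = m := by
  classical
  let T := insert (Classical.arbitrary B) S
  have hT : Classical.arbitrary B ∈ T := Finset.mem_insert_self _ _
  refine ⟨T.card, fun m => T.equivFin (if h : m ∈ T then ⟨m, h⟩ else ⟨_, hT⟩),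
    fun j => T.equivFin.symm j, fun m hm => ?_⟩
  have : m ∈ T := Finset.mem_insert_of_mem hm
  simp [this]

open Classical in
/-- send `c i` to `b i` and use `y` elsewhere -/
noncomputable def glue {B A : Type*} {n : ℕ} (c : Fin n → B) (b : Fin n → A) (y : B → A) (m : B) :
    A :=
  if h : ∃ i, c i = m then b h.choose else y m

theorem comp_glue {B A A' : Type*} {n : ℕ} (c : Fin n → B) (b : Fin n → A) (y : B → A)
    (f : A → A') : f ∘ glue c b y = glue c (f ∘ b) (f ∘ y) := by
  funext m
  unfold glue
  by_cases h : ∃ i, c i = m <;> simp [h]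

theorem step2_one {L : FirstOrder.Language.{u, v}} {B A : Type w} [L.Structure B]
    [L.Structure A] [Nonempty B] {n : ℕ} (b : Fin n → A) (c : Fin n → B)
    (hcb : ∀ (s : ℕ) (ψ : L.BoundedFormula Empty (n + s)), ψ.IsQF →
        ψ.exsN.Realize default c → ψ.exsN.Realize default b)
    (φ : L.Formula B) (q : BoundedFormula.IsQF φ) (h : φ.Realize (id : B → B)) :
    ∃ y : B → A, φ.Realize (glue c b y) := by
  classical
  obtain ⟨s, e, r, hr⟩ := exists_retract (BoundedFormula.freeVarFinset φ)
  let g : B → Fin (n + s) := glue c (Fin.castAdd s) (fun m => Fin.natAdd n (e m))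
  obtain ⟨ψ, qψ, hψ⟩ := exists_bd φ q g
  have hgl : ∀ {K : Type w} (x : Fin n → K) (y : Fin s → K),
      Fin.append x y ∘ g = glue c x (y ∘ e) := by
    intro K x y
    rw [comp_glue]
    congr 1
    · funext i; simp
    · funext i; simp
  have h1 : ψ.exsN.Realize default c := by
    rw [realize_exsN]
    refine ⟨r, ?_⟩
    rw [hψ, hgl]
    refine (realize_congr φ _ _ ?_).1 h
    intro m hm
    unfold glue
    by_cases h : ∃ i, c i = m
    · simp only [h, dite_true]
      exact h.choose_spec.symm
    · simp only [h, dite_false]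
      exact (hr m hm).symm
  have h2 := hcb s ψ qψ h1
  rw [realize_exsN] at h2
  obtain ⟨ys, hys⟩ := h2
  rw [hψ, hgl] at hys
  exact ⟨_, hys⟩

theorem glue_apply {L : FirstOrder.Language.{u, v}} {B A : Type w} [L.Structure B]
    [L.Structure A] {n : ℕ} (b : Fin n → A) (c : Fin n → B)
    (hcb : ∀ (s : ℕ) (ψ : L.BoundedFormula Empty (n + s)), ψ.IsQF →
        ψ.exsN.Realize default c → ψ.exsN.Realize default b) (y : B → A) (i : Fin n) :
    glue c b y (c i) = b i := by
  have h : ∃ j, c j = c i := ⟨i, rfl⟩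
  unfold glue
  rw [dif_pos h]
  have := hcb 0 ((Term.var (Sum.inr h.choose)).bdEqual (Term.var (Sum.inr i)))
    (BoundedFormula.IsAtomic.equal _ _).isQF (by
      exact h.choose_spec)
  exact this

/-- embedding from a map preserving true quantifier-free formulas -/
theorem exists_embedding {L : FirstOrder.Language.{u, v}} {B A : Type*} [L.Structure B]
    [L.Structure A] (f : B → A)
    (h : ∀ φ : L.Formula B, BoundedFormula.IsQF φ → φ.Realize (id : B → B) → φ.Realize f) :
    ∃ F : B ↪[L] A, ⇑F = f := by
  refine ⟨⟨⟨f, ?_⟩, ?_, ?_⟩, rfl⟩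
  · intro x y hxy
    by_contra hne
    have := h (Formula.not (Term.equal (Term.var x) (Term.var y)))
      (BoundedFormula.IsAtomic.equal _ _).isQF.not (by
        rw [Formula.realize_not, Formula.realize_equal]; exact hne)
    rw [Formula.realize_not, Formula.realize_equal] at this
    exact this hxy
  · intro k F x
    have := h (Term.equal (Term.func F (fun i => Term.var (x i))) (Term.var (Structure.funMap F x)))
      (BoundedFormula.IsAtomic.equal _ _).isQF (by
        rw [Formula.realize_equal]; rfl)
    rw [Formula.realize_equal] at this
    exact this.symm
  · intro k R x
    have h1 := h (R.formula (fun i => Term.var (x i))) (BoundedFormula.IsAtomic.rel _ _).isQF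
    have h2 := h (Formula.not (R.formula (fun i => Term.var (x i))))
      (BoundedFormula.IsAtomic.rel _ _).isQF.not
    rw [Formula.realize_rel, Formula.realize_rel] at h1
    rw [Formula.realize_not, Formula.realize_not, Formula.realize_rel, Formula.realize_rel] at h2
    exact ⟨fun h => by_contra fun h' => h2 h' h, h1⟩

theorem conj_fin {L : FirstOrder.Language.{u, v}} {B A : Type w} {α : Type*} [L.Structure B]
    [L.Structure A] (g : B → α) (F : Finset (L.Formula α)) :
    ∃ φ : L.Formula B, BoundedFormula.IsQF φ ∧ φ.Realize (id : B → B) ∧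
      ∀ v : α → A, φ.Realize (v ∘ g) → ∀ χ ∈ F,
        (∃ φ' : L.Formula B, BoundedFormula.IsQF φ' ∧ φ'.Realize (id : B → B) ∧
          χ = φ'.relabel g) → χ.Realize v := by
  classical
  induction F using Finset.induction_on with
  | empty => exact ⟨⊤, BoundedFormula.IsQF.top, Formula.realize_top.2 trivial, by simp⟩
  | insert χ F hχ ih =>
    obtain ⟨φ, q, t, h⟩ := ih
    by_cases hc : ∃ φ' : L.Formula B, BoundedFormula.IsQF φ' ∧ φ'.Realize (id : B → B) ∧
          χ = φ'.relabel g
    · obtain ⟨φ', q', t', e⟩ := hc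
      refine ⟨φ ⊓ φ', q.inf q', Formula.realize_inf.2 ⟨t, t'⟩, fun v hv χ' hχ' hh => ?_⟩
      rw [Formula.realize_inf] at hv
      rcases Finset.mem_insert.1 hχ' with rfl | hχ'
      · rw [e, Formula.realize_relabel]
        exact hv.2
      · exact h v hv.1 χ' hχ' hh
    · refine ⟨φ, q, t, fun v hv χ' hχ' hh => ?_⟩
      rcases Finset.mem_insert.1 hχ' with rfl | hχ'
      · exact absurd hh hc
      · exact h v hv χ' hχ' hh

theorem step2 {L : FirstOrder.Language.{u, v}} {M A : Type (max u v w)} [L.Structure M]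
    [L.Structure A] [Nonempty M] [Nonempty A] {n : ℕ} (hMA : AnETheorySub L n M A) :
    ∃ (A' : Type (max u v w)) (_ : L.Structure A') (_ : Nonempty A') (j : A ↪ₑ[L] A'),
      ∀ b : Fin n → A, ∃ (B : Type (max u v w)) (_ : L.Structure B) (_ : M ↪ₑ[L] B)
        (f : B ↪[L] A'), ∀ i, j (b i) ∈ Set.range f := by
  classical
  choose B sB nB jB c hc using fun b : Fin n → A => step1 hMA b
  let α := A ⊕ (Σ b : Fin n → A, B b)
  let g : ∀ b, B b → α := fun b => glue (c b) (Sum.inl ∘ b) (fun m => Sum.inr ⟨b, m⟩)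
  let Γ₁ : Set (L.Formula α) :=
    {χ | ∃ φ : L.Formula A, φ.Realize (id : A → A) ∧ χ = φ.relabel Sum.inl}
  let Γ₂ : Set (L.Formula α) :=
    {χ | ∃ (b : Fin n → A) (φ : L.Formula (B b)), BoundedFormula.IsQF φ ∧
      φ.Realize (id : B b → B b) ∧ χ = φ.relabel (g b)}
  have hvg : ∀ {K : Type (max u v w)} (v : α → K) b,
      v ∘ g b = glue (c b) (v ∘ Sum.inl ∘ b) (fun m => v (Sum.inr ⟨b, m⟩)) := by
    intro K v b
    exact comp_glue _ _ _ _
  obtain ⟨A', i1, i2, v, hv⟩ := compact (Γ₁ ∪ Γ₂) (by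
    intro F hF
    choose φ q t h using fun b => conj_fin (A := A) (g b) F
    choose y hy using fun b => step2_one b (c b) (hc b) (φ b) (q b) (t b)
    refine ⟨A, inferInstance, inferInstance, Sum.elim id (fun p => y p.1 p.2), ?_⟩
    intro χ hχ
    rcases hF hχ with ⟨φ', t', rfl⟩ | ⟨b, φ', q', t', e⟩
    · rw [Formula.realize_relabel]
      exact t'
    · refine h b _ ?_ χ hχ ⟨φ', q', t', e⟩
      rw [hvg]
      exact hy b)
  refine ⟨A', i1, i2, ⟨v ∘ Sum.inl, ?_⟩, ?_⟩
  · have key : ∀ φ : L.Formula A, φ.Realize (id : A → A) → φ.Realize (v ∘ Sum.inl) := by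
      intro φ hφ
      have := hv _ (Or.inl ⟨φ, hφ, rfl⟩)
      rwa [Formula.realize_relabel] at this
    intro k φ x
    have key2 : φ.Realize x → φ.Realize ((v ∘ Sum.inl) ∘ x) := by
      intro h
      have := key (φ.relabel x) (Formula.realize_relabel.2 h)
      exact Formula.realize_relabel.1 this
    have key3 : ¬ φ.Realize x → ¬ φ.Realize ((v ∘ Sum.inl) ∘ x) := by
      intro h
      have := key (Formula.not (φ.relabel x)) (by
        rw [Formula.realize_not, Formula.realize_relabel]; exact h)
      rw [Formula.realize_not, Formula.realize_relabel] at this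
      exact this
    exact ⟨fun h => by_contra fun h' => key3 h' h, key2⟩
  · intro b
    obtain ⟨f, hf⟩ := exists_embedding (L := L) (v ∘ g b) (by
      intro φ q t
      have := hv _ (Or.inr ⟨b, φ, q, t, rfl⟩)
      rwa [Formula.realize_relabel] at this)
    refine ⟨B b, sB b, jB b, f, fun i => ⟨c b i, ?_⟩⟩
    rw [hf]
    have := glue_apply b (c b) (hc b) (fun _ => b i) i
    change v (glue (c b) (Sum.inl ∘ b) _ (c b i)) = v (Sum.inl (b i))
    congr 1
    have h : ∃ j, c b j = c b i := ⟨i, rfl⟩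
    unfold glue at this ⊢
    rw [dif_pos h] at this ⊢
    exact congrArg Sum.inl this

/-- a stage of the elementary chain -/
structure Stage (L : FirstOrder.Language.{u, v}) (n : ℕ) (M : Type (max u v w))
    [L.Structure M] where
  carrier : Type (max u v w)
  str : L.Structure carrier
  ne : Nonempty carrier
  sub : AnETheorySub L n M carrier

attribute [instance] Stage.str Stage.ne

theorem Stage.exists_next {L : FirstOrder.Language.{u, v}} {n : ℕ} {M : Type (max u v w)}
    [L.Structure M] [Nonempty M] (S : Stage.{u, v, w} L n M) :
    ∃ (S' : Stage.{u, v, w} L n M) (j : S.carrier ↪ₑ[L] S'.carrier),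
      ∀ b : Fin n → S.carrier, ∃ (B : Type (max u v w)) (_ : L.Structure B) (_ : M ↪ₑ[L] B)
        (f : B ↪[L] S'.carrier), ∀ i, j (b i) ∈ Set.range f := by
  obtain ⟨A', i1, i2, j, h⟩ := step2.{u, v, w} S.sub
  exact ⟨⟨A', i1, i2, fun s ψ q hM => (j.map_sentence _).1 (S.sub s ψ q hM)⟩, j, h⟩

theorem limit_elementary {L : FirstOrder.Language.{u, v}} (G : ℕ → Type w)
    [∀ i, L.Structure (G i)] (j : ∀ k, G k ↪ₑ[L] G (k + 1)) {α : Type*} {m : ℕ}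
    (φ : L.BoundedFormula α m) : ∀ (k : ℕ) (v : α → G k) (xs : Fin m → G k),
      let f := DirectedSystem.natLERec (fun k => (j k).toEmbedding)
      φ.Realize (DirectLimit.of L ℕ G (fun a b h => f a b h) k ∘ v)
        (DirectLimit.of L ℕ G (fun a b h => f a b h) k ∘ xs) ↔ φ.Realize v xs := by
  intro k v xs f
  have hel : ∀ (k d : ℕ) {β : Type _} {p : ℕ} (χ : L.BoundedFormula β p) (v : β → G k)
      (xs : Fin p → G k),
      χ.Realize (f k (k + d) (Nat.le_add_right _ _) ∘ v) (f k (k + d) (Nat.le_add_right _ _) ∘ xs) ↔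
        χ.Realize v xs := by
    intro k d
    induction d with
    | zero =>
      intro β p χ v xs
      have : ∀ x, f k (k + 0) (Nat.le_add_right _ _) x = x := by
        intro x
        simp [f, DirectedSystem.coe_natLERec, Nat.leRecOn_self]
      have h1 : ∀ {γ : Type _} (z : γ → G k), f k (k + 0) (Nat.le_add_right _ _) ∘ z = z :=
        fun z => funext fun t => this (z t)
      have h2 : ∀ {γ : Type} (z : γ → G k), f k (k + 0) (Nat.le_add_right _ _) ∘ z = z :=
        fun z => funext fun t => this (z t)
      rw [h1, h2]
    | succ d ih =>
      intro β p χ v xs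
      have : ∀ x, f k (k + (d + 1)) (Nat.le_add_right _ _) x =
          j (k + d) (f k (k + d) (Nat.le_add_right _ _) x) := by
        intro x
        simp only [f, DirectedSystem.coe_natLERec]
        exact Nat.leRecOn_succ (Nat.le_add_right k d) x
      have h1 : ∀ {γ : Type _} (z : γ → G k), f k (k + (d + 1)) (Nat.le_add_right _ _) ∘ z =
          j (k + d) ∘ (f k (k + d) (Nat.le_add_right _ _) ∘ z) :=
        fun z => funext fun t => this (z t)
      have h2 : ∀ {γ : Type} (z : γ → G k), f k (k + (d + 1)) (Nat.le_add_right _ _) ∘ z =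
          j (k + d) ∘ (f k (k + d) (Nat.le_add_right _ _) ∘ z) :=
        fun z => funext fun t => this (z t)
      rw [h1, h2]
      exact ((j (k + d)).map_boundedFormula χ _ _).trans (ih χ v xs)
  have hof : ∀ (k l : ℕ) (h : k ≤ l) (x : G k), DirectLimit.of L ℕ G (fun a b h => f a b h) k x =
      DirectLimit.of L ℕ G (fun a b h => f a b h) l (f k l h x) :=
    fun k l h x => (DirectLimit.of_f (f := fun a b h => f a b h)).symm
  induction φ generalizing k with
  | falsum => rfl
  | equal t₁ t₂ => exact qf_realize _ (BoundedFormula.IsAtomic.equal t₁ t₂).isQF v xs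
  | rel R ts => exact qf_realize _ (BoundedFormula.IsAtomic.rel R ts).isQF v xs
  | imp _ _ ih1 ih2 =>
    rw [BoundedFormula.realize_imp, BoundedFormula.realize_imp]
    exact imp_congr (ih1 k v xs) (ih2 k v xs)
  | all χ ih =>
    rw [BoundedFormula.realize_all, BoundedFormula.realize_all]
    constructor
    · intro h a
      have := h (DirectLimit.of L ℕ G (fun a b h => f a b h) k a)
      rw [← Fin.comp_snoc] at this
      exact (ih _ _ _).1 this
    · intro h z
      obtain ⟨l, a, rfl⟩ := DirectLimit.exists_of z
      have e1 : DirectLimit.of L ℕ G (fun a b h => f a b h) k ∘ v =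
          DirectLimit.of L ℕ G (fun a b h => f a b h) (k + l) ∘
            (f k (k + l) (Nat.le_add_right _ _) ∘ v) :=
        funext fun t => hof _ _ _ _
      have e2 : DirectLimit.of L ℕ G (fun a b h => f a b h) k ∘ xs =
          DirectLimit.of L ℕ G (fun a b h => f a b h) (k + l) ∘
            (f k (k + l) (Nat.le_add_right _ _) ∘ xs) :=
        funext fun t => hof _ _ _ _
      rw [e1, e2, hof l (k + l) (Nat.le_add_left _ _) a, ← Fin.comp_snoc]
      refine (ih _ _ _).2 ?_
      exact BoundedFormula.realize_all.1 ((hel k l χ.all v xs).2 (BoundedFormula.realize_all.2 h)) _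

theorem chain {L : FirstOrder.Language.{u, v}} {M A : Type (max u v w)} [L.Structure M]
    [L.Structure A] [Nonempty M] [Nonempty A] {n : ℕ} (hMA : AnETheorySub L n M A) :
    ∃ (A' : Type (max u v w)) (_ : L.Structure A') (_ : A ↪ₑ[L] A'),
      ∀ b : Fin n → A', ∃ (B : Type (max u v w)) (_ : L.Structure B) (_ : M ↪ₑ[L] B)
        (f : B ↪[L] A'), ∀ i, b i ∈ Set.range f := by
  classical
  choose next j hj using fun S : Stage.{u, v, w} L n M => S.exists_next
  let S : ℕ → Stage.{u, v, w} L n M := fun k =>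
    Nat.rec (motive := fun _ => Stage.{u, v, w} L n M)
      ⟨A, inferInstance, inferInstance, hMA⟩ (fun _ T => next T) k
  let G : ℕ → Type (max u v w) := fun k => (S k).carrier
  let iG : ∀ k : ℕ, L.Structure (G k) := fun k => (S k).str
  let jj : ∀ k : ℕ, G k ↪ₑ[L] G (k + 1) := fun k => j (S k)
  let f := DirectedSystem.natLERec (L := L) (G' := G) (fun k => (jj k).toEmbedding)
  let o := DirectLimit.of L ℕ G (fun a b h => f a b h)
  refine ⟨FirstOrder.Language.DirectLimit G (fun a b h => f a b h), inferInstance, ⟨o 0, ?_⟩, ?_⟩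
  · intro k φ x
    have := limit_elementary G jj φ 0 x default
    refine Iff.trans ?_ this
    rw [Formula.Realize]
    exact iff_of_eq (congrArg (BoundedFormula.Realize φ (o 0 ∘ x)) (Subsingleton.elim _ _))
  · intro b
    obtain ⟨k, y, rfl⟩ := DirectLimit.exists_quotient_mk'_sigma_mk'_eq G (fun a b h => f a b h) b
    obtain ⟨B, sB, jB, F, hF⟩ := hj (S k) y
    refine ⟨B, sB, jB, (o (k + 1)).comp F, fun i => ?_⟩
    obtain ⟨m, hm⟩ := hF i
    refine ⟨m, ?_⟩
    have e : f k (k + 1) (Nat.le_succ k) (y i) = jj k (y i) := by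
      simp only [f, DirectedSystem.coe_natLERec]
      exact Nat.leRecOn_succ' (y i)
    change o (k + 1) (F m) = o k (y i)
    have e2 : o (k + 1) (f k (k + 1) (Nat.le_succ k) (y i)) = o k (y i) :=
      DirectLimit.of_f (f := fun a b h => f a b h)
    rw [← e2, e, hm]

theorem lift_up {L : FirstOrder.Language.{u, v}} (M : Type w) [L.Structure M] :
    ∃ (M' : Type (max w x)) (_ : L.Structure M'), Nonempty (M ↪ₑ[L] M') ∧ Nonempty (M ≃ M') := by
  let e : M ≃ ULift.{x, w} M := Equiv.ulift.symm
  let _ : L.Structure (ULift.{x, w} M) := e.inducedStructure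
  exact ⟨ULift.{x, w} M, inferInstance,
    ⟨(e.inducedStructureEquiv : M ≃[L] ULift.{x, w} M).toElementaryEmbedding⟩, ⟨e⟩⟩

theorem forward {L : FirstOrder.Language.{u, v}} {M A : Type (max u v w)} [L.Structure M]
    [L.Structure A] {n : ℕ} (hMA : AnETheorySub L n M A) :
    ∃ (A' : Type (max u v w)) (_ : L.Structure A') (_ : A ↪ₑ[L] A'),
      ∀ b : Fin n → A', ∃ (B : Type (max u v w)) (_ : L.Structure B) (_ : M ↪ₑ[L] B)
        (f : B ↪[L] A'), ∀ i, b i ∈ Set.range f := by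
  rcases isEmpty_or_nonempty M with hM | hM
  · rcases Nat.eq_zero_or_pos n with rfl | hn
    · refine ⟨A, inferInstance, ElementaryEmbedding.refl L A, fun b =>
        ⟨M, inferInstance, ElementaryEmbedding.refl L M, ?_⟩⟩
      refine ⟨⟨⟨hM.elim, fun x => hM.elim x⟩, fun {k} F x => hM.elim (Structure.funMap F x), ?_⟩,
        fun i => i.elim0⟩
      intro k R x
      cases k with
      | succ k => exact hM.elim (x 0)
      | zero =>
        let ψ : L.BoundedFormula Empty (0 + 0) := R.boundedFormula Fin.elim0
        have q : ψ.IsQF := (BoundedFormula.IsAtomic.rel R _).isQF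
        have key : ∀ (K : Type (max u v w)) [L.Structure K] (z : Fin 0 → K) (a : Fin 0 → K),
            ψ.exsN.Realize default a ↔ Structure.RelMap R z := by
          intro K _ z a
          change Structure.RelMap R _ ↔ _
          exact iff_of_eq (congrArg _ (Subsingleton.elim _ _))
        have key' : ∀ (K : Type (max u v w)) [L.Structure K] (z : Fin 0 → K) (a : Fin 0 → K),
            (BoundedFormula.exsN (s := 0) ψ.not).Realize default a ↔ ¬ Structure.RelMap R z := by
          intro K _ z a
          change (¬ Structure.RelMap R _) ↔ _
          exact not_congr (iff_of_eq (congrArg _ (Subsingleton.elim _ _)))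
        have h1 := hMA 0 ψ q
        have h2 := hMA 0 ψ.not q.not
        rw [realize_alls_exsN, realize_alls_exsN] at h1 h2
        constructor
        · intro h
          by_contra h'
          exact (key' A _ default).1 (h2 (fun a => (key' M x a).2 h') default) h
        · intro h
          exact (key A _ default).1 (h1 (fun a => (key M x a).2 h) default)
    · have hA : IsEmpty A := by
        refine ⟨fun a => ?_⟩
        have := hMA 0 ⊥ BoundedFormula.isQF_bot
        rw [realize_alls_exsN, realize_alls_exsN] at this
        exact this (fun x => hM.elim (x ⟨0, hn⟩)) (fun _ => a)
      exact ⟨A, inferInstance, ElementaryEmbedding.refl L A, fun b => hA.elim (b ⟨0, hn⟩)⟩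
  · rcases isEmpty_or_nonempty A with hA | hA
    · rcases Nat.eq_zero_or_pos n with rfl | hn
      · exfalso
        have := hMA 1 ⊤ BoundedFormula.IsQF.top
        rw [realize_alls_exsN, realize_alls_exsN] at this
        have := this (fun x => by
          rw [realize_exsN]
          exact ⟨fun _ => Classical.arbitrary M, BoundedFormula.realize_top.2 trivial⟩) default
        rw [realize_exsN] at this
        obtain ⟨ys, _⟩ := this
        exact hA.elim (ys 0)
      · exact ⟨A, inferInstance, ElementaryEmbedding.refl L A, fun b => hA.elim (b ⟨0, hn⟩)⟩
    · exact chain.{u, v, w} hMA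

end Stmt2Aux

/-- `Th_{∀ₙ∃}(M) ⊆ Th_{∀ₙ∃}(N)` iff there is an elementary extension `N*` of `N`
such that for every `n`-tuple `b` from `N*` there are an elementary extension `M_b ≽ M` and an
embedding `f : M_b ↪ N*` whose image contains `b₁, …, bₙ`. -/
theorem stmt2 {L : FirstOrder.Language.{u, v}} {M : Type w} {N : Type x}
    [L.Structure M] [L.Structure N] (n : ℕ) :
    AnETheorySub L n M N ↔
      ∃ (N' : Type (max u v w x)) (_ : L.Structure N') (_ : N ↪ₑ[L] N'),
        ∀ b : Fin n → N',
          ∃ (Mb : Type (max u v w x)) (_ : L.Structure Mb) (_ : M ↪ₑ[L] Mb)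
            (f : Mb ↪[L] N'), ∀ i, b i ∈ Set.range f := by
  constructor
  · intro h
    obtain ⟨M', sM, ⟨jM⟩, _⟩ := Stmt2Aux.lift_up.{u, v, w, max u v x} (L := L) M
    obtain ⟨N₀, sN, ⟨jN⟩, _⟩ := Stmt2Aux.lift_up.{u, v, x, max u v w} (L := L) N
    have h' : AnETheorySub L n M' N₀ := fun s ψ q hM =>
      (jN.map_sentence _).1 (h s ψ q ((jM.map_sentence _).2 hM))
    obtain ⟨N', sN', j, hb⟩ := Stmt2Aux.forward.{u, v, max w x} h'
    refine ⟨N', sN', j.comp jN, fun b => ?_⟩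
    obtain ⟨B, sB, jB, f, hf⟩ := hb b
    exact ⟨B, sB, jB.comp jM, f, hf⟩
  · rintro ⟨N', sN, j, hb⟩ s ψ q hM
    rw [j.map_sentence, Stmt2Aux.realize_alls_exsN]
    intro b
    obtain ⟨B, sB, jB, f, hf⟩ := hb b
    choose c hc using hf
    have h1 := (jB.map_sentence _).1 hM
    rw [Stmt2Aux.realize_alls_exsN] at h1
    have h2 := h1 c
    rw [Stmt2Aux.realize_exsN] at h2 ⊢
    obtain ⟨ys, hys⟩ := h2
    refine ⟨f ∘ ys, ?_⟩
    have h3 := (Stmt2Aux.qf_realize f q default (Fin.append c ys)).2 hys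
    have e : f ∘ Fin.append c ys = Fin.append b (f ∘ ys) := by
      funext i
      refine Fin.addCases (fun i => ?_) (fun i => ?_) i <;> simp [hc]
    rw [e] at h3
    convert h3 using 1
end

section
/- Let L be a first-order language, n ∈ ℕ, and let M and N be L-structures. Then Th_{∀ₙ∃}(M) ⊆ Th_{∀ₙ∃}(N) if and only if: for every n-tuple (b₁,…,bₙ) of elements of N there exist an L-structure N_b together with an existentially closed L-embedding N → N_b, an L-structure M_b with Th_{∀ₙ∃}(M_b) = Th_{∀ₙ∃}(M), and an L-embedding f : M_b → N_b such that b₁,…,bₙ (viewed in N_b) all lie in the image of f. -/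
open FirstOrder Language

universe u v w x

section Helpers

open FirstOrder Language BoundedFormula Filter

theorem realize_exsN_aux {L : FirstOrder.Language} {α : Type*} {K : Type*} [L.Structure K]
    {m : ℕ} : ∀ {s : ℕ} (ψ : L.BoundedFormula α (m + s)) (v : α → K) (xs : Fin m → K),
      ψ.exsN.Realize v xs ↔ ∃ ys : Fin s → K, ψ.Realize v (Fin.append xs ys)
  | 0, ψ, v, xs => by
      constructor
      · intro h
        refine ⟨Fin.elim0, ?_⟩
        rw [Fin.append_elim0]
        exact h
      · rintro ⟨ys, h⟩
        have : ys = Fin.elim0 := Subsingleton.elim _ _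
        subst this
        rw [Fin.append_elim0] at h
        exact h
  | s + 1, ψ, v, xs => by
      have ih := realize_exsN_aux (s := s) (BoundedFormula.ex ψ) v xs
      refine Iff.trans ih ?_
      simp only [BoundedFormula.realize_ex]
      constructor
      · rintro ⟨ys, a, h⟩
        refine ⟨Fin.snoc ys a, ?_⟩
        rw [Fin.append_snoc]
        exact h
      · rintro ⟨ys, h⟩
        refine ⟨Fin.init ys, ys (Fin.last _), ?_⟩
        rw [← Fin.append_snoc, Fin.snoc_init_self]
        exact h

theorem sentence_iff_aux {L : FirstOrder.Language} {K : Type*} [L.Structure K]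
    {n s : ℕ} (ψ : L.BoundedFormula Empty (n + s)) :
    (K ⊨ (ψ.exsN.alls : L.Sentence)) ↔
      ∀ xs : Fin n → K, ∃ ys : Fin s → K, ψ.Realize default (Fin.append xs ys) := by
  refine Iff.trans (BoundedFormula.realize_alls (φ := ψ.exsN) (v := (default : Empty → K))) ?_
  exact forall_congr' fun xs => realize_exsN_aux ψ _ xs

theorem isQF_restrict_aux {L : FirstOrder.Language} {α β : Type*} [DecidableEq α] {m : ℕ}
    {φ : L.BoundedFormula α m} (h : φ.IsQF) :
    ∀ f : φ.freeVarFinset → β, (φ.restrictFreeVar f).IsQF := by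
  induction h with
  | falsum => intro f; exact IsQF.falsum
  | of_isAtomic h =>
    intro f
    cases h with
    | equal t₁ t₂ => exact (IsAtomic.equal _ _).isQF
    | rel R ts => exact (IsAtomic.rel _ _).isQF
  | imp h₁ h₂ ih₁ ih₂ => intro f; exact (ih₁ _).imp (ih₂ _)

theorem isQF_iSup_aux {L : FirstOrder.Language} {α ι : Type*} [Finite ι]
    (f : ι → L.Formula α) (h : ∀ i, (f i).IsQF) : (Formula.iSup f).IsQF := by
  unfold Formula.iSup BoundedFormula.iSup
  dsimp only
  generalize (Finset.toList _) = l
  induction l with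
  | nil => exact isQF_bot
  | cons a l ih => exact (h a).sup ih

theorem isQF_iInf_aux {L : FirstOrder.Language} {α ι : Type*} [Finite ι]
    (f : ι → L.Formula α) (h : ∀ i, (f i).IsQF) : (Formula.iInf f).IsQF := by
  unfold Formula.iInf BoundedFormula.iInf
  dsimp only
  generalize (Finset.toList _) = l
  induction l with
  | nil => exact IsQF.top
  | cons a l ih => exact (h a).inf ih

open Classical in
/-- Reduce to finitely many existential variables. -/
noncomputable def redF {L : FirstOrder.Language} {n : ℕ} {β : Type*}
    (θ : L.Formula (Fin n ⊕ β)) :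
    L.Formula (Fin n ⊕ Fin (BoundedFormula.freeVarFinset θ).card) :=
  BoundedFormula.restrictFreeVar θ (fun a =>
    Sum.elim Sum.inl (fun _ => Sum.inr ((BoundedFormula.freeVarFinset θ).equivFin a)) a.1)

theorem redF_isQF {L : FirstOrder.Language} {n : ℕ} {β : Type*}
    (θ : L.Formula (Fin n ⊕ β)) (h : θ.IsQF) : (redF θ).IsQF := by
  classical
  exact isQF_restrict_aux h _

open Classical in
theorem redF_realize {L : FirstOrder.Language} {n : ℕ} {β : Type*}
    (θ : L.Formula (Fin n ⊕ β)) {K : Type*} [L.Structure K] [Nonempty K] (x : Fin n → K) :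
    (∃ y : β → K, θ.Realize (Sum.elim x y)) ↔
      ∃ y, (redF θ).Realize (Sum.elim x y) := by
  constructor
  · rintro ⟨y, h⟩
    refine ⟨fun j => Sum.elim x y ((BoundedFormula.freeVarFinset θ).equivFin.symm j).1, ?_⟩
    refine (BoundedFormula.realize_restrictFreeVar (Sum.elim x y) ?_).2 h
    rintro ⟨a | a, ha⟩ <;> simp
  · rintro ⟨y, h⟩
    refine ⟨fun m => if h : Sum.inr m ∈ BoundedFormula.freeVarFinset θ then
      y ((BoundedFormula.freeVarFinset θ).equivFin ⟨_, h⟩) else Classical.arbitrary K, ?_⟩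
    refine (BoundedFormula.realize_restrictFreeVar _ ?_).1 h
    rintro ⟨a | a, ha⟩
    · simp
    · simp [ha]

/-- Turn free variables into bound ones. -/
def toBd {L : FirstOrder.Language} {n s : ℕ} (θ : L.Formula (Fin n ⊕ Fin s)) :
    L.BoundedFormula Empty (n + s) :=
  BoundedFormula.relabel (n := n + s) (k := 0) (fun a => Sum.inr (finSumFinEquiv a)) θ

theorem toBd_isQF {L : FirstOrder.Language} {n s : ℕ} (θ : L.Formula (Fin n ⊕ Fin s))
    (h : θ.IsQF) : (toBd θ).IsQF := IsQF.relabel h _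

theorem toBd_realize {L : FirstOrder.Language} {n s : ℕ} (θ : L.Formula (Fin n ⊕ Fin s))
    {K : Type*} [L.Structure K] (x : Fin n → K) (y : Fin s → K) :
    (toBd θ).Realize default (Fin.append x y) ↔ θ.Realize (Sum.elim x y) := by
  refine Iff.trans (BoundedFormula.realize_relabel (n := 0) (m := n + s)) ?_
  rw [Formula.Realize]
  have h1 : (Sum.elim (default : Empty → K) (Fin.append x y ∘ Fin.castAdd 0) ∘
      fun a => Sum.inr (finSumFinEquiv a)) = Sum.elim x y := by
    funext a
    rcases a with a | a <;> simp
  rw [h1]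
  exact iff_of_eq (congrArg _ (Subsingleton.elim _ _))

theorem key_aux {L : FirstOrder.Language} {n : ℕ} {M N β : Type*} [L.Structure M] [L.Structure N]
    [Nonempty M] [Nonempty N] (H : AnETheorySub L n M N) (θ : L.Formula (Fin n ⊕ β))
    (hθ : θ.IsQF) (hM : ∀ x : Fin n → M, ∃ y : β → M, θ.Realize (Sum.elim x y))
    (x : Fin n → N) : ∃ y : β → N, θ.Realize (Sum.elim x y) := by
  have h := H _ (toBd (redF θ)) (toBd_isQF _ (redF_isQF _ hθ))
  rw [sentence_iff_aux, sentence_iff_aux] at h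
  simp only [toBd_realize, ← redF_realize] at h
  exact h hM x

theorem step1_aux {L : FirstOrder.Language.{u, v}} {M : Type w} {N : Type x}
    [L.Structure M] [L.Structure N] [Nonempty M] [Nonempty N] {n : ℕ}
    (H : AnETheorySub L n M N) (b : Fin n → N) :
    ∃ (M' : Type (max u v w x)) (_ : L.Structure M') (_ : Nonempty M')
      (_ : ∀ φ : L.Sentence, M' ⊨ φ ↔ M ⊨ φ) (c : Fin n → M'),
      ∀ (s : ℕ) (θ : L.Formula (Fin n ⊕ Fin s)), θ.IsQF →
        (∃ y : Fin s → M', θ.Realize (Sum.elim c y)) →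
        ∃ y : Fin s → N, θ.Realize (Sum.elim b y) := by
  classical
  let P : Type (max u v x) := ULift.{x} {q : Σ s : ℕ, L.Formula (Fin n ⊕ Fin s) //
    q.2.IsQF ∧ ¬ ∃ y : Fin q.1 → N, q.2.Realize (Sum.elim b y)}
  have hF : ∀ F : Finset P, ∃ a : Fin n → M, ∀ q ∈ F,
      ¬ ∃ y : Fin q.down.1.1 → M, q.down.1.2.Realize (Sum.elim a y) := by
    intro F
    by_contra! hcon
    let g : F → L.Formula (Fin n ⊕ (Σ q : F, Fin q.1.down.1.1)) := fun q =>
      q.1.down.1.2.relabel (Sum.map id (fun j => ⟨q, j⟩))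
    obtain ⟨y, hy⟩ := key_aux H (Formula.iSup g)
      (isQF_iSup_aux _ fun q => IsQF.relabel q.1.down.2.1 _) (by
        intro a
        obtain ⟨q, hq, y, hy⟩ := hcon a
        refine ⟨fun z => if h : z.1 = ⟨q, hq⟩ then y (Fin.cast (by rw [h]) z.2) else
          Classical.arbitrary M, ?_⟩
        rw [Formula.realize_iSup]
        refine ⟨⟨q, hq⟩, ?_⟩
        rw [Formula.realize_relabel]
        convert hy using 1
        funext i
        rcases i with i | i <;> simp) b
    rw [Formula.realize_iSup] at hy
    obtain ⟨q, hq⟩ := hy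
    rw [Formula.realize_relabel] at hq
    refine q.1.down.2.2 ⟨fun j => y ⟨q, j⟩, ?_⟩
    convert hq using 1
    funext i
    rcases i with i | i <;> simp
  choose a ha using hF
  let U : Ultrafilter (Finset P) := Ultrafilter.of atTop
  refine ⟨(U : Filter (Finset P)).Product (fun _ => M), inferInstance, inferInstance, ?_,
    fun i => ((fun F => a F i : Finset P → M) : (U : Filter (Finset P)).Product (fun _ => M)), ?_⟩
  · intro φ
    rw [Ultraproduct.sentence_realize]
    simp
  · intro s θ hθ hy
    by_contra hN
    obtain ⟨y, hy⟩ := hy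
    have hsurj : ∀ j, ∃ z : Finset P → M,
        (z : (U : Filter (Finset P)).Product (fun _ => M)) = y j :=
      fun j => Quotient.exists_rep (y j)
    choose z hz using hsurj
    let X : Fin n ⊕ Fin s → Finset P → M := Sum.elim (fun i F => a F i) z
    have h1 := (Ultraproduct.realize_formula_cast (u := U) (M := fun _ => M) θ X).1 (by
      refine Eq.mp (congrArg (Formula.Realize θ) ?_) hy
      funext i
      rcases i with i | i
      · rfl
      · exact (hz i).symm)
    let q : P := ⟨⟨⟨s, θ⟩, hθ, hN⟩⟩
    have h2 : ∀ᶠ F in (U : Filter (Finset P)), q ∈ F := by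
      have : ∀ᶠ F in (atTop : Filter (Finset P)), {q} ≤ F := eventually_ge_atTop _
      refine (Ultrafilter.of_le atTop) (this.mono fun F hF => ?_)
      simpa using hF
    obtain ⟨F, hF1, hF2⟩ := (h1.and h2).exists
    refine ha F q hF2 ⟨fun j => z j F, ?_⟩
    convert hF1 using 1
    funext i
    rcases i with i | i <;> rfl

theorem step2_aux {L : FirstOrder.Language.{u, v}} {M' : Type (max u v w x)} {N : Type x}
    [L.Structure M'] [L.Structure N] [Nonempty M'] [Nonempty N] {n : ℕ}
    (b : Fin n → N) (c : Fin n → M')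
    (H : ∀ (s : ℕ) (θ : L.Formula (Fin n ⊕ Fin s)), θ.IsQF →
        (∃ y : Fin s → M', θ.Realize (Sum.elim c y)) →
        ∃ y : Fin s → N, θ.Realize (Sum.elim b y)) :
    ∃ (Nb : Type (max u v w x)) (_ : L.Structure Nb) (h : N ↪[L] Nb) (_ : IsECEmbedding h)
      (f : M' ↪[L] Nb), ∀ i, h (b i) ∈ Set.range f := by
  classical
  let P : Type (max u v w x) := {θ : L.Formula (Fin n ⊕ M') //
    θ.IsQF ∧ θ.Realize (Sum.elim c id)}
  have hF : ∀ F : Finset P, ∃ g : M' → N, ∀ q ∈ F, q.1.Realize (Sum.elim b g) := by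
    intro F
    let θ : L.Formula (Fin n ⊕ M') := Formula.iInf (fun q : F => q.1.1)
    have hθ : θ.IsQF := isQF_iInf_aux _ fun q => q.1.2.1
    obtain ⟨g, hg⟩ := (redF_realize θ b).2 (H _ (redF θ) (redF_isQF _ hθ)
      ((redF_realize θ c).1 ⟨id, Formula.realize_iInf.2 fun q => q.1.2.2⟩))
    rw [Formula.realize_iInf] at hg
    exact ⟨g, fun q hq => hg ⟨q, hq⟩⟩
  choose g hg using hF
  let U : Ultrafilter (Finset P) := Ultrafilter.of atTop
  let Nb : Type (max u v w x) := (U : Filter (Finset P)).Product (fun _ => N)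
  let f : M' → Nb := fun m => ((fun F => g F m : Finset P → N) : (U : Filter (Finset P)).Product (fun _ => N))
  let d : N → Nb := fun m => ((fun F => m : Finset P → N) : (U : Filter (Finset P)).Product (fun _ => N))
  have hd : ∀ {γ : Type} (φ : L.Formula γ) (y : γ → N),
      φ.Realize (fun i => d (y i)) ↔ φ.Realize y := by
    intro γ φ y
    have := Ultraproduct.realize_formula_cast (u := U) (M := fun _ => N) φ (fun i _ => y i)
    refine this.trans ?_
    simp
  let D : N ↪ₑ[L] Nb := ⟨d, fun k φ y => hd φ y⟩
  have hf0 : ∀ (φ : L.Formula (Fin n ⊕ M')), φ.IsQF → φ.Realize (Sum.elim c id) →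
      φ.Realize (Sum.elim (fun i => d (b i)) f) := by
    intro φ hφ h
    let X : Fin n ⊕ M' → Finset P → N := Sum.elim (fun i F => b i) (fun m F => g F m)
    have h1 := (Ultraproduct.realize_formula_cast (u := U) (M := fun _ => N) φ X).2 (by
      have : ∀ᶠ F in (atTop : Filter (Finset P)), {⟨φ, hφ, h⟩} ≤ F := eventually_ge_atTop _
      refine (Ultrafilter.of_le atTop) (this.mono fun F hF => ?_)
      have := hg F ⟨φ, hφ, h⟩ (by simpa using hF)
      show φ.Realize _
      convert this using 1
      funext i
      rcases i with i | i <;> rfl)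
    refine Eq.mp (congrArg (Formula.Realize φ) ?_) h1
    funext i
    rcases i with i | i <;> rfl
  have hf : ∀ (φ : L.Formula (Fin n ⊕ M')), φ.IsQF → (φ.Realize (Sum.elim (fun i => d (b i)) f) ↔
      φ.Realize (Sum.elim c id)) := by
    intro φ hφ
    refine ⟨fun h => ?_, hf0 φ hφ⟩
    by_contra h'
    exact (Formula.realize_not.1 (hf0 (Formula.not φ) hφ.not (Formula.realize_not.2 h'))) h
  refine ⟨Nb, inferInstance, D.toEmbedding, ?_, ⟨⟨f, ?_⟩, ?_, ?_⟩, ?_⟩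
  · intro k s ψ _ a h
    exact (hd _ a).1 h
  · intro m m' h
    have := (hf (Term.equal (Term.var (Sum.inr m)) (Term.var (Sum.inr m')))
      (IsAtomic.equal _ _).isQF).1 (by simpa [Formula.realize_equal] using h)
    simpa [Formula.realize_equal] using this
  · intro k F y
    have := (hf (Term.equal (Term.func F (fun i => Term.var (Sum.inr (y i))))
      (Term.var (Sum.inr (Structure.funMap F y))))
      (IsAtomic.equal _ _).isQF).2 (by simp [Formula.realize_equal])
    simp only [Formula.realize_equal, Term.realize_func, Term.realize_var, Sum.elim_inr] at this
    exact this.symm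
  · intro k R y
    have := (hf (R.formula (fun i => Term.var (Sum.inr (y i)))) (IsAtomic.rel _ _).isQF)
    simp only [Formula.realize_rel, Term.realize_var, Sum.elim_inr, id] at this
    exact this
  · intro i
    refine ⟨c i, ?_⟩
    have := (hf (Term.equal (Term.var (Sum.inr (c i))) (Term.var (Sum.inl i)))
      (IsAtomic.equal _ _).isQF).2 (by simp [Formula.realize_equal])
    simp only [Formula.realize_equal, Term.realize_var, Sum.elim_inr, Sum.elim_inl] at this
    exact this

/-- Free the first variables. -/
def exF {L : FirstOrder.Language} {n s : ℕ} (ψ : L.BoundedFormula Empty (n + s)) :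
    L.BoundedFormula (Fin n) s :=
  (BoundedFormula.relabel (n := s) (k := 0) (β := Fin n)
    (Sum.elim Empty.elim finSumFinEquiv.symm) (BoundedFormula.toFormula ψ))

theorem exF_isQF {L : FirstOrder.Language} {n s : ℕ} (ψ : L.BoundedFormula Empty (n + s))
    (h : ψ.IsQF) : (exF ψ).IsQF := by
  refine IsQF.relabel ?_ _
  induction h with
  | falsum => exact IsQF.falsum
  | of_isAtomic h =>
    cases h with
    | equal t₁ t₂ => exact (IsAtomic.equal _ _).isQF
    | rel R ts => exact (IsAtomic.rel _ _).isQF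
  | imp h₁ h₂ ih₁ ih₂ => exact ih₁.imp ih₂

theorem exF_realize {L : FirstOrder.Language} {n s : ℕ} (ψ : L.BoundedFormula Empty (n + s))
    {K : Type*} [L.Structure K] (x : Fin n → K) :
    ((exF ψ).exs : L.Formula (Fin n)).Realize x ↔
      ∃ y : Fin s → K, ψ.Realize default (Fin.append x y) := by
  refine Iff.trans (BoundedFormula.realize_exs (φ := exF ψ) (v := x)) ?_
  refine exists_congr fun y => ?_
  refine Iff.trans (BoundedFormula.realize_relabel (n := 0) (m := s)) ?_
  have h1 : (Sum.elim x (y ∘ Fin.castAdd 0) ∘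
      (Sum.elim Empty.elim finSumFinEquiv.symm : Empty ⊕ Fin (n + s) → Fin n ⊕ Fin s))
        = Sum.elim default (Fin.append x y) := by
    funext a
    rcases a with a | a
    · exact a.elim
    · refine Fin.addCases (fun i => ?_) (fun i => ?_) a <;> simp
  rw [h1]
  have h2 := BoundedFormula.realize_toFormula ψ (Sum.elim default (Fin.append x y))
  refine Iff.trans ?_ h2
  exact iff_of_eq (congrArg _ (Subsingleton.elim _ _))

end Helpers

/-- `Th_{∀ₙ∃}(M) ⊆ Th_{∀ₙ∃}(N)` iff for every `n`-tuple `b` from `N` there are an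
existentially closed embedding `h : N → N_b`, a structure `M_b` with
`Th_{∀ₙ∃}(M_b) = Th_{∀ₙ∃}(M)`, and an embedding `f : M_b ↪ N_b` whose image contains
`h(b₁), …, h(bₙ)`. -/
theorem stmt3 {L : FirstOrder.Language.{u, v}} {M : Type w} {N : Type x}
    [L.Structure M] [L.Structure N] (n : ℕ) :
    AnETheorySub L n M N ↔
      ∀ b : Fin n → N,
        ∃ (Nb : Type (max u v w x)) (_ : L.Structure Nb) (h : N ↪[L] Nb) (_ : IsECEmbedding h)
          (Mb : Type (max u v w x)) (_ : L.Structure Mb)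
          (_ : AnETheorySub L n Mb M) (_ : AnETheorySub L n M Mb)
          (f : Mb ↪[L] Nb), ∀ i, h (b i) ∈ Set.range f := by
  constructor
  · intro H b
    rcases isEmpty_or_nonempty M with hM | hM
    · -- here `n = 0`
      have hn : n = 0 := by
        rcases n with _ | n
        · rfl
        · exfalso
          have := H 0 ⊥ BoundedFormula.isQF_bot
          rw [sentence_iff_aux, sentence_iff_aux] at this
          obtain ⟨_, h⟩ := this (fun xs => (hM.false (xs 0)).elim) b
          exact h
      subst hn
      let _ : L.Structure (ULift.{max u v w} N) := Equiv.inducedStructure Equiv.ulift.symm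
      let _ : L.Structure (ULift.{max u v x} M) := Equiv.inducedStructure Equiv.ulift.symm
      let eN : N ≃[L] ULift.{max u v w} N := Equiv.inducedStructureEquiv Equiv.ulift.symm
      let eM : M ≃[L] ULift.{max u v x} M := Equiv.inducedStructureEquiv Equiv.ulift.symm
      have hem : IsEmpty (ULift.{max u v x} M) := inferInstance
      have hRel : ∀ (R : L.Relations 0) (y : Fin 0 → N) (z : Fin 0 → M),
          Structure.RelMap R y ↔ Structure.RelMap R z := by
        intro R y z
        have key : ∀ ψ : L.BoundedFormula Empty (0 + 0), ψ.IsQF →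
            ψ.Realize default z → ψ.Realize default y := by
          intro ψ hψ hz
          have := H 0 ψ hψ
          rw [sentence_iff_aux, sentence_iff_aux] at this
          obtain ⟨ys, h⟩ := this (fun xs => ⟨Fin.elim0, by
            convert hz⟩) y
          convert h
        have hr : (Relations.boundedFormula (l := 0 + 0) (n := 0) (α := Empty) R Fin.elim0).IsQF :=
          (BoundedFormula.IsAtomic.rel _ _).isQF
        have h1 := key _ hr
        have h2 := key _ hr.not
        simp only [BoundedFormula.realize_not, BoundedFormula.realize_rel] at h1 h2
        have e1 : (fun i : Fin 0 => Term.realize (Sum.elim (default : Empty → M) z)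
          ((Fin.elim0 : Fin 0 → L.Term (Empty ⊕ Fin (0 + 0))) i)) = z := Subsingleton.elim _ _
        have e2 : (fun i : Fin 0 => Term.realize (Sum.elim (default : Empty → N) y)
          ((Fin.elim0 : Fin 0 → L.Term (Empty ⊕ Fin (0 + 0))) i)) = y := Subsingleton.elim _ _
        rw [e1, e2] at h1 h2
        tauto
      refine ⟨ULift.{max u v w} N, inferInstance, eN.toEmbedding, ?_, ULift.{max u v x} M,
        inferInstance, ?_, ?_, ⟨⟨fun m => (hem.false m).elim, fun m => (hem.false m).elim⟩,
          ?_, ?_⟩, fun i => i.elim0⟩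
      · intro k s ψ _ a h
        exact (StrongHomClass.realize_formula eN _).1 h
      · intro s ψ _ h
        exact (StrongHomClass.realize_sentence eM _).2 h
      · intro s ψ _ h
        exact (StrongHomClass.realize_sentence eM _).1 h
      · intro k F y
        exact (hem.false (Structure.funMap F y)).elim
      · intro k R y
        rcases k with _ | k
        · exact hRel R _ _
        · exact (hem.false (y 0)).elim
    · have hN : Nonempty N := by
        rcases n with _ | n
        · have := H 1 ⊤ BoundedFormula.IsQF.top
          rw [sentence_iff_aux, sentence_iff_aux] at this
          obtain ⟨y, _⟩ := this (fun xs => ⟨fun _ => Classical.arbitrary M, by simp⟩) b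
          exact ⟨y 0⟩
        · exact ⟨b 0⟩
      obtain ⟨M', _, _, hM', c, hc⟩ := step1_aux H b
      obtain ⟨Nb, iN, h, hec, f, hf⟩ := step2_aux.{u, v, w, x} b c hc
      exact ⟨Nb, iN, h, hec, M', inferInstance, fun s ψ _ hh => (hM' _).1 hh,
        fun s ψ _ hh => (hM' _).2 hh, f, hf⟩
  · intro H s ψ hψ hM
    rw [sentence_iff_aux]
    intro b
    obtain ⟨Nb, _, h, hec, Mb, _, _, h2, f, hf⟩ := H b
    have hMb := h2 s ψ hψ hM
    rw [sentence_iff_aux] at hMb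
    choose c hc using hf
    obtain ⟨ys, hys⟩ := hMb c
    have h3 := (hψ.realize_embedding f).2 hys
    have h4 := hec n s (exF ψ) (exF_isQF ψ hψ) b
    rw [exF_realize, exF_realize] at h4
    refine h4 ⟨f ∘ ys, ?_⟩
    convert h3 using 1
    funext i
    refine Fin.addCases (fun i => ?_) (fun i => ?_) i
    · simp [hc]
    · simp
end

section
/- For every prime p, every n ≥ 1 and every r ≥ 0, there exists an existential formula χ(x, y₁,…,y_r, z₁,…,zₙ) in the language of rings (that is, χ is of the form ∃w₁…∃wₛ ψ with ψ quantifier-free) such that for every field K of characteristic p and every p-basis (a₁,…,aₙ) of K, the set {(x, y₁,…,y_r) ∈ K^{1+r} : K ⊨ χ(x, y⃗, a⃗)} is the graph of a surjective function from K onto K^r. -/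
open FirstOrder Language

attribute [local instance] FirstOrder.Ring.compatibleRingOfRing

universe u

/-- `a : Fin n → K` is a `p`-basis of the field `K` of characteristic `p`: every element of `K`
is, in a unique way, a linear combination of the monomials `a₁^e₁ ⋯ aₙ^eₙ` (with `0 ≤ eᵢ < p`)
with coefficients in the subfield `K^p` of `p`-th powers. -/
def IsPBasis (p : ℕ) {n : ℕ} {K : Type*} [Field K] (a : Fin n → K) : Prop :=
  ∀ x : K, ∃! c : (Fin n → Fin p) → K,
    x = ∑ e : Fin n → Fin p, (c e) ^ p * ∏ i : Fin n, (a i) ^ (e i : ℕ)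

theorem stmt5_qf {α β : Type} (ι : Type) [Fintype ι] (q : ι → FreeCommRing (α ⊕ β)) (s : ℕ)
    (f : β ≃ Fin s) :
    ∃ ψ : Language.ring.BoundedFormula α s, ψ.IsQF ∧
      ∀ (K : Type u) [Field K] (v : α → K),
        (ψ.exs : Language.ring.Formula _).Realize v ↔
          ∃ w : β → K, ∀ i, FreeCommRing.lift (Sum.elim v w) (q i) = 0 := by
  classical
  have key : ∀ L : List ι, ∃ ψ : Language.ring.BoundedFormula α s, ψ.IsQF ∧
      ∀ (K : Type u) [Field K] (v : α → K) (w : Fin s → K),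
        ψ.Realize v w ↔ ∀ i ∈ L, FreeCommRing.lift (Sum.elim v (w ∘ f)) (q i) = 0 := by
    intro L
    induction L with
    | nil => exact ⟨⊤, FirstOrder.Language.BoundedFormula.IsQF.top, by simp⟩
    | cons i L ih =>
      obtain ⟨ψ, h1, h2⟩ := ih
      refine ⟨(FirstOrder.Language.Term.bdEqual (FirstOrder.Ring.termOfFreeCommRing
        (FreeCommRing.map (Sum.map id f) (q i)))
        (FirstOrder.Ring.termOfFreeCommRing 0)) ⊓ ψ, ?_, ?_⟩
      · exact FirstOrder.Language.BoundedFormula.IsQF.inf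
          (FirstOrder.Language.BoundedFormula.IsAtomic.equal _ _).isQF h1
      · intro K _ v w
        have e : FreeCommRing.lift (Sum.elim v w) (FreeCommRing.map (Sum.map id f) (q i))
            = FreeCommRing.lift (Sum.elim v (w ∘ f)) (q i) := by
          have : (FreeCommRing.lift (Sum.elim v w)).comp (FreeCommRing.map (Sum.map id f))
            = FreeCommRing.lift (Sum.elim v (w ∘ f)) := by
            apply FreeCommRing.hom_ext
            rintro (a | b) <;> simp
          exact congrArg (fun g => g (q i)) this
        simp [h2, e]
  obtain ⟨ψ, h1, h2⟩ := key Finset.univ.toList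
  refine ⟨ψ, h1, fun K _ v => ?_⟩
  rw [FirstOrder.Language.BoundedFormula.realize_exs]
  constructor
  · rintro ⟨w, hw⟩
    exact ⟨w ∘ f, fun i => (h2 K v w).1 hw i (by simp)⟩
  · rintro ⟨w, hw⟩
    refine ⟨w ∘ f.symm, (h2 K v _).2 fun i _ => ?_⟩
    have : (w ∘ f.symm) ∘ f = w := by ext; simp
    rw [this]; exact hw i

theorem stmt5_surj {K : Type*} (d0 d1 : K → K) (x0 : K) (h : ∀ a b, ∃ x, d0 x = a ∧ d1 x = b)
    (r : ℕ) : ∀ y : Fin r → K, ∃ x, ∀ j : Fin r, d0 (d1^[(j : ℕ)] x) = y j := by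
  induction r with
  | zero => exact fun y => ⟨x0, fun j => j.elim0⟩
  | succ r ih =>
    intro y
    obtain ⟨x1, hx1⟩ := ih (Fin.tail y)
    obtain ⟨x, hx, hx'⟩ := h (y 0) x1
    refine ⟨x, fun j => ?_⟩
    refine Fin.cases ?_ (fun j => ?_) j
    · simpa using hx
    · simpa [hx', Fin.tail] using hx1 j

theorem stmt5 (p : ℕ) (hp : p.Prime) (n : ℕ) (hn : 1 ≤ n) (r : ℕ) :
    ∃ (s : ℕ) (ψ : Language.ring.BoundedFormula (Unit ⊕ Fin r ⊕ Fin n) s), ψ.IsQF ∧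
      ∀ (K : Type u) [Field K] [CharP K p] (a : Fin n → K), IsPBasis p a →
        (∀ x : K, ∃! y : Fin r → K,
          (ψ.exs : Language.ring.Formula _).Realize
            (Sum.elim (fun _ : Unit => x) (Sum.elim y a))) ∧
        (∀ y : Fin r → K, ∃ x : K,
          (ψ.exs : Language.ring.Formula _).Realize
            (Sum.elim (fun _ : Unit => x) (Sum.elim y a))) := by
  classical
  let e0 : Fin n → Fin p := fun _ => ⟨0, hp.pos⟩
  let e1 : Fin n → Fin p := fun _ => ⟨1, hp.one_lt⟩
  have hne : e1 ≠ e0 := fun h => by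
    have := congrArg Fin.val (congrFun h ⟨0, hn⟩)
    simp [e0, e1] at this
  let A := Unit ⊕ Fin r ⊕ Fin n
  let B := (Fin r × (Fin n → Fin p)) ⊕ Fin (r + 1)
  let V : A ⊕ B → FreeCommRing (A ⊕ B) := FreeCommRing.of
  let q : Unit ⊕ Fin r ⊕ Fin r ⊕ Fin r → FreeCommRing (A ⊕ B) :=
    Sum.elim (fun _ => V (.inr (.inr 0)) - V (.inl (.inl ())))
     (Sum.elim (fun j => V (.inr (.inr j.castSucc)) -
        ∑ e : Fin n → Fin p, V (.inr (.inl (j, e))) ^ p *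
          ∏ i : Fin n, V (.inl (.inr (.inr i))) ^ (e i : ℕ))
      (Sum.elim (fun j => V (.inr (.inl (j, e0))) - V (.inl (.inr (.inl j))))
        (fun j => V (.inr (.inl (j, e1))) - V (.inr (.inr j.succ)))))
  obtain ⟨ψ, hqf, hψ⟩ := stmt5_qf.{u} _ q _ (Fintype.equivFin B)
  refine ⟨_, ψ, hqf, fun K _ _ a ha => ?_⟩
  choose D hD hD' using ha
  simp only at hD hD'
  have hR : ∀ (x : K) (y : Fin r → K), (ψ.exs : Language.ring.Formula _).Realize
            (Sum.elim (fun _ : Unit => x) (Sum.elim y a)) ↔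
          ∀ j : Fin r, D ((fun t => D t e1)^[(j : ℕ)] x) e0 = y j := by
    intro x y
    rw [hψ]
    constructor
    · rintro ⟨w, hw⟩
      have w1 := hw (.inl ())
      have w2 := fun j => hw (.inr (.inl j))
      have w3 := fun j => hw (.inr (.inr (.inl j)))
      have w4 := fun j => hw (.inr (.inr (.inr j)))
      simp only [q, V, Sum.elim_inl, Sum.elim_inr, map_sub, map_sum, map_mul, map_prod, map_pow,
        FreeCommRing.lift_of, sub_eq_zero] at w1 w2 w3 w4
      have hc : ∀ j e, w (.inl (j, e)) = D (w (.inr (Fin.castSucc j))) e := fun j e =>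
        congrFun (hD' _ (fun e => w (.inl (j, e))) (w2 j)) e
      have hx : ∀ j : Fin (r + 1), w (.inr j) = (fun t => D t e1)^[(j : ℕ)] x := by
        intro j
        induction j using Fin.induction with
        | zero => simpa using w1
        | succ j ih =>
          rw [← w4, hc, ih, Fin.val_succ, Function.iterate_succ_apply']
          rfl
      intro j
      rw [← w3, hc, hx]
      rfl
    · intro h
      refine ⟨Sum.elim (fun je => D ((fun t => D t e1)^[(je.1 : ℕ)] x) je.2)
        (fun j => (fun t => D t e1)^[(j : ℕ)] x), ?_⟩
      rintro (_ | j | j | j)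
      · simp [q, V]
      · simp only [q, V, Sum.elim_inl, Sum.elim_inr, map_sub, map_sum, map_mul, map_prod, map_pow,
          FreeCommRing.lift_of, sub_eq_zero]
        exact hD _
      · simpa [q, V, sub_eq_zero] using h j
      · simp only [q, V, Sum.elim_inl, Sum.elim_inr, map_sub,
          FreeCommRing.lift_of, sub_eq_zero, Fin.val_succ, Function.iterate_succ_apply']
  simp only [hR]
  refine ⟨fun x => ⟨fun j => D ((fun t => D t e1)^[(j : ℕ)] x) e0, fun _ => rfl,
    fun y hy => funext fun j => (hy j).symm⟩, ?_⟩
  refine stmt5_surj (fun t => D t e0) (fun t => D t e1) 0 (fun b c => ?_) r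
  let C : (Fin n → Fin p) → K := fun e => if e = e0 then b else c
  have hC := hD' _ C rfl
  exact ⟨_, by rw [← hC]; simp [C], by rw [← hC]; simp [C, hne]⟩
end

section
/- Let p be a prime, n ≥ 1, and let L be a language extending the language of rings together with n additional constant symbols c₁,…,cₙ. For every L-formula φ of the form ∀x₁…∀x_r ∃y₁…∃yₛ ψ with ψ quantifier-free, there exists an L-formula φ' with the same free variables, of the form ∀w ∃y₁…∃y_{s'} ψ' with ψ' quantifier-free, such that: for every field K of characteristic p with [K : K^p] = pⁿ, every p-basis (a₁,…,aₙ) of K, and every L-structure K' whose ring-language reduct is K and which interprets cᵢ as aᵢ, the formulas φ and φ' are equivalent in K' (they are satisfied by exactly the same assignments of their free variables). -/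
open FirstOrder Language

attribute [local instance] FirstOrder.Ring.compatibleRingOfRing

universe u v w

theorem aux_exsN {L : FirstOrder.Language} {α : Type*} {M : Type*} [L.Structure M] {m : ℕ}
    (v : α → M) (xs : Fin m → M) : ∀ {s : ℕ} (φ : L.BoundedFormula α (m + s)),
    φ.exsN.Realize v xs ↔ ∃ ys : Fin s → M, φ.Realize v (Fin.append xs ys) := by
  intro s
  induction s with
  | zero =>
    intro φ
    have h : ∀ ys : Fin 0 → M, Fin.append xs ys = xs := by
      intro ys; rw [Subsingleton.elim ys Fin.elim0, Fin.append_elim0]; rfl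
    simp only [h]
    exact ⟨fun h => ⟨Fin.elim0, h⟩, fun ⟨_, h⟩ => h⟩
  | succ s ih =>
    intro φ
    have h0 : (BoundedFormula.exsN (s := s + 1) φ) =
      BoundedFormula.exsN (s := s) (BoundedFormula.ex (n := m + s) φ) := rfl
    rw [h0, ih]
    simp only [BoundedFormula.realize_ex]
    constructor
    · rintro ⟨ys, a, h⟩
      refine ⟨Fin.snoc ys a, ?_⟩
      rw [Fin.append_snoc]
      exact h
    · rintro ⟨ys, h⟩
      refine ⟨Fin.init ys, ys (Fin.last s), ?_⟩
      rw [← Fin.append_snoc, Fin.snoc_init_self]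
      exact h

theorem aux_subst {L : FirstOrder.Language.{v, w}} {α β : Type*} {m k : ℕ}
    (f : α ⊕ Fin m → L.Term (β ⊕ Fin k)) (φ : L.BoundedFormula α m) (hφ : φ.IsQF) :
    ∃ φ' : L.BoundedFormula β k, φ'.IsQF ∧ ∀ (M : Type u) [L.Structure M] (v : β → M)
      (xs : Fin k → M), φ'.Realize v xs ↔
        φ.Realize (fun a => (f (Sum.inl a)).realize (Sum.elim v xs))
          (fun i => (f (Sum.inr i)).realize (Sum.elim v xs)) := by
  have key : ∀ (M : Type u) [L.Structure M] (v : β → M) (xs : Fin k → M),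
      (Sum.elim (fun a => (f (Sum.inl a)).realize (Sum.elim v xs))
          (fun i => (f (Sum.inr i)).realize (Sum.elim v xs))) =
        fun x => (f x).realize (Sum.elim v xs) := by
    intro M _ v xs
    funext x
    rcases x with x | x <;> rfl
  induction hφ with
  | falsum => exact ⟨⊥, BoundedFormula.isQF_bot, fun M _ v xs => Iff.rfl⟩
  | of_isAtomic h =>
    cases h with
    | equal t₁ t₂ =>
      refine ⟨(t₁.subst f).bdEqual (t₂.subst f), (BoundedFormula.IsAtomic.equal _ _).isQF, ?_⟩
      intro M _ v xs
      simp only [BoundedFormula.realize_bdEqual, Term.realize_subst, key]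
    | rel R ts =>
      refine ⟨R.boundedFormula fun i => (ts i).subst f, (BoundedFormula.IsAtomic.rel _ _).isQF, ?_⟩
      intro M _ v xs
      simp only [BoundedFormula.realize_rel, Term.realize_subst, key]
  | imp _ _ ih1 ih2 =>
    obtain ⟨a, ha, ha'⟩ := ih1
    obtain ⟨b, hb, hb'⟩ := ih2
    refine ⟨a.imp b, ha.imp hb, ?_⟩
    intro M _ v xs
    simp only [BoundedFormula.realize_imp, ha', hb']

theorem aux_iInf {L : FirstOrder.Language.{v, w}} {β : Type*} {k r : ℕ}
    (f : Fin r → L.BoundedFormula β k) (hf : ∀ i, (f i).IsQF) :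
    (BoundedFormula.iInf f).IsQF := by
  unfold BoundedFormula.iInf
  have : ∀ l : List (L.BoundedFormula β k), (∀ x ∈ l, x.IsQF) →
      (l.foldr (· ⊓ ·) ⊤).IsQF := by
    intro l
    induction l with
    | nil => intro _; exact BoundedFormula.IsQF.top
    | cons a l ih =>
      intro h
      exact (h a (by simp)).inf (ih fun x hx => h x (by simp [hx]))
  apply this
  intro x hx
  simp only [List.mem_map] at hx
  obtain ⟨i, _, rfl⟩ := hx
  exact hf i

theorem aux_total {K E : Type*} (S : (E → K) → K) (hS : ∀ x, ∃! c, x = S c) (e0 : E) :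
    ∀ (r : ℕ) (w : K), ∃ c : Fin r → E → K, ∀ i : Fin r,
      (Fin.cons w (fun i => c i e0) : Fin (r + 1) → K) i.castSucc = S (c i) := by
  intro r
  induction r with
  | zero => intro w; exact ⟨fun i => i.elim0, fun i => i.elim0⟩
  | succ r ih =>
    intro w
    obtain ⟨d, hd, -⟩ := hS w
    obtain ⟨c, hc⟩ := ih (d e0)
    refine ⟨Fin.cons d c, fun i => ?_⟩
    refine Fin.cases ?_ (fun j => ?_) i
    · simpa using hd
    · rw [← Fin.succ_castSucc, Fin.cons_succ, Fin.cons_succ, ← hc j]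
      refine Fin.cases ?_ (fun l => ?_) j.castSucc <;> simp

theorem aux_surj {K E : Type*} [Zero K] (S : (E → K) → K) (hS : ∀ x, ∃! c, x = S c) (e0 e1 : E)
    (he : e0 ≠ e1) :
    ∀ (r : ℕ) (xs : Fin r → K), ∃ w, ∀ c : Fin r → E → K, (∀ i : Fin r,
      (Fin.cons w (fun i => c i e0) : Fin (r + 1) → K) i.castSucc = S (c i)) →
      ∀ i, c i e1 = xs i := by
  classical
  intro r
  induction r with
  | zero => intro xs; exact ⟨0, fun c _ i => i.elim0⟩
  | succ r ih =>
    intro xs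
    obtain ⟨w', hw'⟩ := ih (fun i => xs i.succ)
    refine ⟨S (fun e => if e = e0 then w' else xs 0), fun c hc => ?_⟩
    have h0 := hc 0
    simp only [Fin.castSucc_zero, Fin.cons_zero] at h0
    have h1 : c 0 = (fun e => if e = e0 then w' else xs 0) := (hS _).unique h0 rfl
    have h2 := hw' (fun i => c i.succ) (fun j => by
      rw [← hc j.succ, ← Fin.succ_castSucc, Fin.cons_succ]
      refine Fin.cases ?_ (fun l => ?_) j.castSucc
      · simp [h1]
      · simp)
    intro i
    refine Fin.cases ?_ (fun j => ?_) i
    · simp [h1, he.symm]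
    · exact h2 j

theorem aux_term {L : FirstOrder.Language.{v, w}} (ι : Language.ring →ᴸ L) (p n : ℕ)
    (c : Fin n → L.Constants) {γ : Type*} (x : (Fin n → Fin p) → γ) :
    ∃ t : L.Term γ, ∀ (K : Type u) [Field K] [L.Structure K] [ι.IsExpansionOn K]
        (v : γ → K), t.realize v = ∑ e : Fin n → Fin p, (v (x e)) ^ p *
          ∏ i : Fin n, (constantMap (c i) : K) ^ (e i : ℕ) := by
  let P : FreeCommRing (γ ⊕ Fin n) := ∑ e : Fin n → Fin p, (FreeCommRing.of (Sum.inl (x e))) ^ p *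
          ∏ i : Fin n, (FreeCommRing.of (Sum.inr i)) ^ (e i : ℕ)
  refine ⟨(ι.onTerm (FirstOrder.Ring.termOfFreeCommRing P)).subst
    (Sum.elim (fun g => Term.var g) (fun i => (c i).term)), ?_⟩
  intro K _ _ _ v
  rw [Term.realize_subst, LHom.realize_onTerm, FirstOrder.Ring.realize_termOfFreeCommRing]
  simp only [P, map_sum, map_mul, map_pow, map_prod, FreeCommRing.lift_of, Sum.elim_inl,
    Sum.elim_inr, Term.realize_var, Term.realize_constants]

/-- let `p` be a prime, `n ≥ 1`, and `L` a language extending the language of rings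
(via `ι`) together with `n` constant symbols `c₁, …, cₙ`.  For every `L`-formula of the form
`∀ x₁ … x_r ∃ y₁ … yₛ ψ` (`ψ` quantifier-free) there is an `L`-formula of the form
`∀ w ∃ y₁ … y_{s'} ψ'` (`ψ'` quantifier-free) with the same free variables which is equivalent
to it in every field `K` of characteristic `p` with `[K : K^p] = pⁿ`, for every `L`-structure on
`K` expanding the ring structure and interpreting `cᵢ` as the members of a `p`-basis. -/
theorem stmt7 (p : ℕ) (hp : p.Prime) (n : ℕ) (hn : 1 ≤ n)
    (L : FirstOrder.Language.{v, w}) (ι : Language.ring →ᴸ L) (c : Fin n → L.Constants)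
    (α : Type*) (r s : ℕ) (ψ : L.BoundedFormula α (r + s)) (hψ : ψ.IsQF) :
    ∃ (s' : ℕ) (ψ' : L.BoundedFormula α (1 + s')), ψ'.IsQF ∧
      ∀ (K : Type u) [Field K] [CharP K p] [L.Structure K] [ι.IsExpansionOn K]
        (a : Fin n → K), IsPBasis p a → (∀ i, (constantMap (c i) : K) = a i) →
        ∀ v : α → K,
          (ψ.exsN.alls : L.Formula α).Realize v ↔ (ψ'.exsN.alls : L.Formula α).Realize v := by
  classical
  have hp2 := hp.two_le
  let e0 : Fin n → Fin p := fun _ => ⟨0, by omega⟩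
  let e1 : Fin n → Fin p := fun _ => ⟨1, by omega⟩
  have he : e0 ≠ e1 := by
    intro h
    have := congrFun h ⟨0, by omega⟩
    simp [e0, e1] at this
  obtain ⟨N, ⟨ε⟩⟩ : ∃ N, Nonempty (Fin r × (Fin n → Fin p) ≃ Fin N) :=
    ⟨_, ⟨Fintype.equivFin _⟩⟩
  let W : α ⊕ Fin (1 + (N + s)) := Sum.inr (Fin.castAdd (N + s) 0)
  let C : Fin r → (Fin n → Fin p) → α ⊕ Fin (1 + (N + s)) := fun i e =>
    Sum.inr (Fin.natAdd 1 (Fin.castAdd s (ε (i, e))))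
  let Y : Fin s → α ⊕ Fin (1 + (N + s)) := fun j => Sum.inr (Fin.natAdd 1 (Fin.natAdd N j))
  choose t ht using fun i : Fin r => aux_term.{u} ι p n c (C i)
  let θ : Fin r → L.BoundedFormula α (1 + (N + s)) := fun i =>
    (Term.var ((Fin.cons W (fun i => C i e0) : Fin (r + 1) → _) i.castSucc)).bdEqual (t i)
  obtain ⟨φ, hφ, hφ'⟩ := aux_subst.{u} (Sum.elim (fun a => Term.var (Sum.inl a))
    (Fin.append (fun i => Term.var (C i e1)) (fun j => Term.var (Y j))) :
      α ⊕ Fin (r + s) → L.Term (α ⊕ Fin (1 + (N + s)))) ψ hψ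
  refine ⟨N + s, BoundedFormula.iInf θ ⊓ φ,
    (aux_iInf θ fun i => (BoundedFormula.IsAtomic.equal _ _).isQF).inf hφ, ?_⟩
  intro K _ _ _ _ a ha hca v
  have hθ : ∀ xs, (BoundedFormula.iInf θ).Realize v xs ↔ ∀ i : Fin r,
      (Fin.cons (Sum.elim v xs W) (fun i => Sum.elim v xs (C i e0)) : Fin (r + 1) → K) i.castSucc =
        ∑ e : Fin n → Fin p, (Sum.elim v xs (C i e)) ^ p * ∏ i : Fin n, (a i) ^ (e i : ℕ) := by
    intro xs
    rw [BoundedFormula.realize_iInf]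
    refine forall_congr' fun i => ?_
    simp only [θ, BoundedFormula.realize_bdEqual, ht, hca, Term.realize_var]
    have : ∀ j : Fin (r + 1), Sum.elim v xs ((Fin.cons W (fun i => C i e0) : Fin (r + 1) → _) j)
      = (Fin.cons (Sum.elim v xs W) (fun i => Sum.elim v xs (C i e0)) : Fin (r + 1) → K) j := by
      intro j
      refine Fin.cases ?_ (fun l => ?_) j <;> simp
    rw [this]
  have hφ2 : ∀ xs, φ.Realize v xs ↔ ψ.Realize v (Fin.append
      (fun i => Sum.elim v xs (C i e1)) (fun j => Sum.elim v xs (Y j))) := by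
    intro xs
    rw [hφ']
    apply iff_of_eq
    congr 1
    funext i
    refine Fin.addCases (fun j => ?_) (fun j => ?_) i <;> simp
  simp only [BoundedFormula.realize_alls, aux_exsN, BoundedFormula.realize_inf, hθ, hφ2]
  let S : ((Fin n → Fin p) → K) → K := fun c =>
    ∑ e : Fin n → Fin p, (c e) ^ p * ∏ i : Fin n, (a i) ^ (e i : ℕ)
  have hS : ∀ x, ∃! c, x = S c := ha
  constructor
  · intro h ws
    obtain ⟨d, hd⟩ := aux_total S hS e0 r (ws 0)
    obtain ⟨ys, hys⟩ := h (fun i => d i e1)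
    refine ⟨Fin.append (fun k => d (ε.symm k).1 (ε.symm k).2) ys, ?_, ?_⟩
    · simpa [W, C] using hd
    · simpa [C, Y] using hys
  · intro h xs
    obtain ⟨w, hw⟩ := aux_surj S hS e0 e1 he r xs
    obtain ⟨zs, hz1, hz2⟩ := h (fun _ => w)
    refine ⟨fun j => zs (Fin.natAdd N j), ?_⟩
    have h3 := hw (fun i e => zs (Fin.castAdd s (ε (i, e)))) (by simpa [W, C] using hz1)
    simp only [C, Y, Sum.elim_inr, Fin.append_right, h3] at hz2
    exact hz2
end

section
/- Let p be a prime, n ≥ 1, and let L be a language extending the language of rings. For every L-formula φ of the form ∀x₁…∀x_r ∃y₁…∃yₛ ψ with ψ quantifier-free, there exists an L-formula φ' with the same free variables, of the form ∀w₁…∀w_{n+1} ∃y₁…∃y_{s'} ψ' with ψ' quantifier-free, such that: for every field K of characteristic p with [K : K^p] = pⁿ and every L-structure K' whose ring-language reduct is K, the formulas φ and φ' are equivalent in K' (they are satisfied by exactly the same assignments of their free variables). -/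
open FirstOrder Language

attribute [local instance] FirstOrder.Ring.compatibleRingOfRing

universe u v w

theorem my_realize_exsN {L : FirstOrder.Language.{v, w}} {α : Type*} {K : Type u} [L.Structure K]
    {m : ℕ} (x : α → K) (xs : Fin m → K) :
    ∀ {s : ℕ} (φ : L.BoundedFormula α (m + s)),
      (φ.exsN).Realize x xs ↔ ∃ ys : Fin s → K, φ.Realize x (Fin.append xs ys)
  | 0, φ => by
    have h : ∀ ys : Fin 0 → K, Fin.append xs ys = xs := by
      intro ys
      funext i
      exact Fin.append_left xs ys i
    constructor
    · intro hh
      exact ⟨Fin.elim0, by rw [h]; exact hh⟩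
    · rintro ⟨ys, hh⟩
      rw [h] at hh
      exact hh
  | s + 1, φ => by
    have ih := my_realize_exsN x xs (s := s) φ.ex
    refine ih.trans ?_
    simp only [BoundedFormula.realize_ex]
    constructor
    · rintro ⟨ys, a, h⟩
      refine ⟨Fin.snoc ys a, ?_⟩
      rw [Fin.append_snoc]
      exact h
    · rintro ⟨ys, h⟩
      refine ⟨Fin.init ys, ys (Fin.last s), ?_⟩
      rw [← Fin.append_snoc, Fin.snoc_init_self]
      exact h

def QFDef {L : FirstOrder.Language.{v, w}} (ι : Language.ring →ᴸ L) {α : Type*} {M : ℕ}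
    (P : ∀ (K : Type u) [Field K] [L.Structure K], (α → K) → (Fin M → K) → Prop) : Prop :=
  ∃ φ : L.BoundedFormula α M, φ.IsQF ∧
    ∀ (K : Type u) [Field K] [L.Structure K] [ι.IsExpansionOn K] (x : α → K) (xs : Fin M → K),
      φ.Realize x xs ↔ P K x xs

section
variable {L : FirstOrder.Language.{v, w}} {ι : Language.ring →ᴸ L} {α : Type*} {M : ℕ}
  {P Q : ∀ (K : Type u) [Field K] [L.Structure K], (α → K) → (Fin M → K) → Prop}

theorem QFDef.and (hP : QFDef ι P) (hQ : QFDef ι Q) :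
    QFDef ι (fun K _ _ x xs => P K x xs ∧ Q K x xs) := by
  obtain ⟨φ, h1, h2⟩ := hP
  obtain ⟨χ, h3, h4⟩ := hQ
  refine ⟨φ ⊓ χ, h1.inf h3, ?_⟩
  intro K _ _ _ x xs
  rw [BoundedFormula.realize_inf, h2, h4]

theorem QFDef.or (hP : QFDef ι P) (hQ : QFDef ι Q) :
    QFDef ι (fun K _ _ x xs => P K x xs ∨ Q K x xs) := by
  obtain ⟨φ, h1, h2⟩ := hP
  obtain ⟨χ, h3, h4⟩ := hQ
  refine ⟨φ ⊔ χ, h1.sup h3, ?_⟩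
  intro K _ _ _ x xs
  rw [BoundedFormula.realize_sup, h2, h4]

theorem QFDef.not (hP : QFDef ι P) :
    QFDef ι (fun K _ _ x xs => ¬ P K x xs) := by
  obtain ⟨φ, h1, h2⟩ := hP
  refine ⟨φ.not, h1.not, ?_⟩
  intro K _ _ _ x xs
  rw [BoundedFormula.realize_not, h2]

theorem QFDef.all {β : Type} [Finite β]
    {R : β → ∀ (K : Type u) [Field K] [L.Structure K], (α → K) → (Fin M → K) → Prop}
    (hR : ∀ b, QFDef ι (R b)) :
    QFDef ι (fun K _ _ x xs => ∀ b, R b K x xs) := by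
  choose φ h1 h2 using hR
  refine ⟨BoundedFormula.iInf φ, ?_, ?_⟩
  · unfold BoundedFormula.iInf
    dsimp only
    generalize (@Finset.univ β (Fintype.ofFinite β)).toList = l
    induction l with
    | nil => exact BoundedFormula.IsQF.top
    | cons a l ih => exact (h1 a).inf ih
  · intro K _ _ _ x xs
    rw [BoundedFormula.realize_iInf]
    exact forall_congr' fun b => h2 b K x xs

theorem QFDef.poly {X : Type} (q : FreeCommRing X) (f : X → Fin M) :
    QFDef ι (α := α) (fun K _ _ _ xs => FreeCommRing.lift (xs ∘ f) q = 0) := by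
  refine ⟨(ι.onTerm ((FirstOrder.Ring.termOfFreeCommRing q).relabel (fun i => Sum.inr (f i)))).bdEqual
    (ι.onTerm (0 : Language.ring.Term (α ⊕ Fin M))), ?_, ?_⟩
  · exact (BoundedFormula.IsAtomic.equal _ _).isQF
  · intro K _ _ _ x xs
    rw [BoundedFormula.realize_bdEqual, LHom.realize_onTerm, LHom.realize_onTerm,
      Term.realize_relabel, FirstOrder.Ring.realize_termOfFreeCommRing,
      FirstOrder.Ring.realize_zero]
    rfl

theorem QFDef.congr (hP : QFDef ι P)
    (h : ∀ (K : Type u) [Field K] [L.Structure K] (x : α → K) (xs : Fin M → K),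
      P K x xs ↔ Q K x xs) : QFDef ι Q := by
  obtain ⟨φ, h1, h2⟩ := hP
  exact ⟨φ, h1, fun K _ _ _ x xs => (h2 K x xs).trans (h K x xs)⟩

theorem QFDef.map {m : ℕ} (ψ : L.BoundedFormula α m) (hψ : ψ.IsQF) (f : Fin m → Fin M) :
    QFDef ι (fun (K : Type u) _ _ x (xs : Fin M → K) => ψ.Realize x (xs ∘ f)) := by
  induction hψ with
  | falsum => exact ⟨⊥, BoundedFormula.isQF_bot, fun K _ _ _ x xs => Iff.rfl⟩
  | of_isAtomic h =>
    have hs : ∀ {K : Type u} (x : α → K) (xs : Fin M → K),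
        Sum.elim x xs ∘ Sum.map id f = Sum.elim x (xs ∘ f) := by
      intro K x xs
      funext i
      cases i <;> rfl
    cases h with
    | equal t₁ t₂ =>
      refine ⟨(t₁.relabel (Sum.map id f)).bdEqual (t₂.relabel (Sum.map id f)),
        (BoundedFormula.IsAtomic.equal _ _).isQF, fun K _ _ _ x xs => ?_⟩
      beta_reduce
      rw [BoundedFormula.realize_bdEqual, BoundedFormula.realize_bdEqual,
        Term.realize_relabel, Term.realize_relabel, hs]
    | rel R ts =>
      refine ⟨R.boundedFormula (fun i => (ts i).relabel (Sum.map id f)),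
        (BoundedFormula.IsAtomic.rel _ _).isQF, fun K _ _ _ x xs => ?_⟩
      beta_reduce
      rw [BoundedFormula.realize_rel, BoundedFormula.realize_rel]
      simp only [Term.realize_relabel, hs]
  | imp h1 h2 ih1 ih2 =>
    obtain ⟨φ, h1, h2⟩ := ih1
    obtain ⟨χ, h3, h4⟩ := ih2
    refine ⟨φ.imp χ, h1.imp h3, ?_⟩
    intro K _ _ _ x xs
    beta_reduce at *
    rw [BoundedFormula.realize_imp, BoundedFormula.realize_imp, h2, h4]
end

/-- Linear algebra: an independent family of the right size has unique representations. -/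
theorem indep_basis {F V I : Type*} [Field F] [AddCommGroup V] [Module F V] [Fintype I]
    (b a : I → V) (hb : ∀ x, ∃! c : I → F, x = ∑ i, c i • b i)
    (ha : ∀ c : I → F, ∑ i, c i • a i = 0 → c = 0) :
    ∀ x, ∃! c : I → F, x = ∑ i, c i • a i := by
  have hB : Function.Bijective (Fintype.linearCombination F b) := by
    rw [Function.bijective_iff_existsUnique]
    intro x
    obtain ⟨c, h1, h2⟩ := hb x
    exact ⟨c, by simpa [Fintype.linearCombination_apply] using h1.symm,
      fun y hy => h2 y (by simpa [Fintype.linearCombination_apply] using hy.symm)⟩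
  let e := LinearEquiv.ofBijective _ hB
  have hA : Function.Injective (Fintype.linearCombination F a) := by
    rw [← LinearMap.ker_eq_bot, LinearMap.ker_eq_bot']
    intro c hc
    exact ha c (by simpa [Fintype.linearCombination_apply] using hc)
  have hi : Function.Injective (e.symm.toLinearMap ∘ₗ Fintype.linearCombination F a) := by
    simpa using hA
  have hs := LinearMap.injective_iff_surjective.1 hi
  intro x
  obtain ⟨c, hc⟩ := hs (e.symm x)
  have hc' : Fintype.linearCombination F a c = x := e.symm.injective hc
  refine ⟨c, by simpa [Fintype.linearCombination_apply] using hc'.symm, ?_⟩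
  intro y hy
  apply hA
  rw [hc', hy, Fintype.linearCombination_apply]

/-- The decoding polynomial. -/
def GG (p : ℕ) {n : ℕ} {K : Type*} [CommRing K] (a : Fin n → K)
    (c : (Fin n → Fin p) → K) : K :=
  ∑ e : Fin n → Fin p, (c e) ^ p * ∏ i : Fin n, (a i) ^ (e i : ℕ)

theorem GG_map (p : ℕ) {n : ℕ} {A K : Type*} [CommRing A] [CommRing K] (f : A →+* K)
    (a : Fin n → A) (c : (Fin n → Fin p) → A) :
    f (GG p a c) = GG p (fun i => f (a i)) (fun e => f (c e)) := by
  simp [GG, map_sum, map_prod]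

theorem pbasis_of_indep (p : ℕ) (hp : p.Prime) {n : ℕ} {K : Type*} [Field K] [CharP K p]
    (b a : Fin n → K) (hb : IsPBasis p b)
    (ha : ∀ c, GG p a c = 0 → c = 0) : IsPBasis p a := by
  have : Fact p.Prime := ⟨hp⟩
  have : ExpChar K p := ExpChar.prime hp
  exact @indep_basis K K (Fin n → Fin p) _ _ (Module.compHom K (frobenius K p)) _
    (fun e => ∏ i : Fin n, (b i) ^ (e i : ℕ)) (fun e => ∏ i : Fin n, (a i) ^ (e i : ℕ)) hb ha

theorem pbasis_indep (p : ℕ) (hp : p.Prime) {n : ℕ} {K : Type*} [Field K]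
    (b : Fin n → K) (hb : IsPBasis p b) :
    ∀ c, GG p b c = 0 → c = 0 := by
  intro c hc
  refine (hb 0).unique hc.symm ?_
  simp [hp.ne_zero]

/-- Coherent decoding. -/
def Dec (p : ℕ) {n r : ℕ} {K : Type*} [Field K] (e1 : Fin n → Fin p) (a : Fin n → K)
    (W : Fin (r + 1) → K) (c : Fin r × (Fin n → Fin p) → K) : Prop :=
  ∀ j : Fin r, W j.castSucc = GG p a (fun e => c (j, e)) ∧ W j.succ = c (j, e1)

theorem dec_unique (p : ℕ) {n r : ℕ} {K : Type*} [Field K] (e1 : Fin n → Fin p) (a : Fin n → K)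
    (ha : IsPBasis p a) (W W' : Fin (r + 1) → K) (c c' : Fin r × (Fin n → Fin p) → K)
    (h : Dec p e1 a W c) (h' : Dec p e1 a W' c') (h0 : W 0 = W' 0) : c = c' := by
  have key : ∀ j : Fin r, W j.castSucc = W' j.castSucc → ∀ e, c (j, e) = c' (j, e) := by
    intro j hj e
    have hu : (fun e => c (j, e)) = fun e => c' (j, e) := by
      refine (ha (W j.castSucc)).unique (h j).1 ?_
      rw [hj]
      exact (h' j).1
    exact congrFun hu e
  have hW : ∀ j, W j = W' j := by
    intro j
    induction j using Fin.induction with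
    | zero => exact h0
    | succ j ih => rw [(h j).2, (h' j).2, key j ih]
  funext ⟨j, e⟩
  exact key j (hW _) e

theorem dec_exists (p : ℕ) {n r : ℕ} {K : Type*} [Field K] (e1 : Fin n → Fin p) (a : Fin n → K)
    (ha : IsPBasis p a) (w : K) :
    ∃ (W : Fin (r + 1) → K) (c : Fin r × (Fin n → Fin p) → K), Dec p e1 a W c ∧ W 0 = w := by
  choose d hd using fun x => (ha x).exists
  refine ⟨fun j => (fun x => d x e1)^[(j : ℕ)] w,
    fun q => d ((fun x => d x e1)^[(q.1 : ℕ)] w) q.2, ?_, rfl⟩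
  intro j
  refine ⟨hd _, ?_⟩
  simp only [Fin.val_succ, Function.iterate_succ_apply']

theorem enc_exists (p : ℕ) {n : ℕ} {K : Type*} [Field K] (e0 e1 : Fin n → Fin p) (h01 : e0 ≠ e1)
    (a : Fin n → K) : ∀ (r : ℕ) (x : Fin r → K),
    ∃ (W : Fin (r + 1) → K) (c : Fin r × (Fin n → Fin p) → K), Dec p e1 a W c ∧
      ∀ j, c (j, e0) = x j := by
  intro r
  induction r with
  | zero => exact fun x => ⟨fun _ => 0, fun _ => 0, fun j => j.elim0, fun j => j.elim0⟩
  | succ r ih =>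
    intro x
    obtain ⟨W, c, h1, h2⟩ := ih (fun j => x j.succ)
    let d : (Fin n → Fin p) → K := fun e => if e = e0 then x 0 else W 0
    refine ⟨Fin.cons (GG p a d) W,
      fun q => (Fin.cons d (fun j e => c (j, e)) : Fin (r + 1) → (Fin n → Fin p) → K) q.1 q.2,
      ?_, ?_⟩
    · intro j
      induction j using Fin.cases with
      | zero => simp [d, h01.symm]
      | succ j => simpa using h1 j
    · intro j
      induction j using Fin.cases with
      | zero => simp [d]
      | succ j => simpa using h2 j

/-- let `p` be a prime, `n ≥ 1`, and `L` a language extending the language of rings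
(via `ι`).  For every `L`-formula of the form `∀ x₁ … x_r ∃ y₁ … yₛ ψ` (`ψ` quantifier-free)
there is an `L`-formula of the form `∀ w₁ … w_{n+1} ∃ y₁ … y_{s'} ψ'` (`ψ'` quantifier-free)
with the same free variables which is equivalent to it in every field `K` of characteristic `p`
with `[K : K^p] = pⁿ` (i.e. with an `n`-element `p`-basis), for every `L`-structure on `K`
expanding the ring structure. -/
theorem stmt8 (p : ℕ) (hp : p.Prime) (n : ℕ) (hn : 1 ≤ n)
    (L : FirstOrder.Language.{v, w}) (ι : Language.ring →ᴸ L)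
    (α : Type*) (r s : ℕ) (ψ : L.BoundedFormula α (r + s)) (hψ : ψ.IsQF) :
    ∃ (s' : ℕ) (ψ' : L.BoundedFormula α ((n + 1) + s')), ψ'.IsQF ∧
      ∀ (K : Type u) [Field K] [CharP K p] [L.Structure K] [ι.IsExpansionOn K],
        (∃ a : Fin n → K, IsPBasis p a) →
        ∀ v : α → K,
          (ψ.exsN.alls : L.Formula α).Realize v ↔ (ψ'.exsN.alls : L.Formula α).Realize v := by
  have hp2 := hp.two_le
  let e0 : Fin n → Fin p := fun _ => ⟨0, by omega⟩
  let e1 : Fin n → Fin p := fun _ => ⟨1, by omega⟩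
  have h01 : e0 ≠ e1 := by
    intro h
    have := congrFun h ⟨0, by omega⟩
    simp [e0, e1] at this
  let E := Fin n → Fin p
  let I := E ⊕ (Fin (r + 1) ⊕ ((Fin r × E) ⊕ Fin s))
  let s' := Fintype.card I
  let ei : I ≃ Fin s' := Fintype.equivFin I
  let f : Fin (n + 1) ⊕ I → Fin ((n + 1) + s') :=
    Sum.elim (Fin.castAdd s') (fun i => Fin.natAdd (n + 1) (ei i))
  let ia : Fin n → Fin (n + 1) ⊕ I := fun i => Sum.inl i.castSucc
  let iw : Fin (n + 1) ⊕ I := Sum.inl (Fin.last n)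
  let iz : E → Fin (n + 1) ⊕ I := fun e => Sum.inr (Sum.inl e)
  let iW : Fin (r + 1) → Fin (n + 1) ⊕ I := fun j => Sum.inr (Sum.inr (Sum.inl j))
  let ic : Fin r × E → Fin (n + 1) ⊕ I := fun q => Sum.inr (Sum.inr (Sum.inr (Sum.inl q)))
  let iy : Fin s → Fin (n + 1) ⊕ I := fun k => Sum.inr (Sum.inr (Sum.inr (Sum.inr k)))
  let o : Fin (n + 1) ⊕ I → FreeCommRing (Fin (n + 1) ⊕ I) := FreeCommRing.of
  have main : QFDef ι (α := α) (fun (K : Type u) _ _ x (xs : Fin ((n + 1) + s') → K) =>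
      (¬ (∀ e, xs (f (iz e)) = 0) ∧
        GG p (fun i => xs (f (ia i))) (fun e => xs (f (iz e))) = 0) ∨
      ((xs (f (iW 0)) = xs (f iw) ∧
        Dec p e1 (fun i => xs (f (ia i))) (fun j => xs (f (iW j))) (fun q => xs (f (ic q)))) ∧
        ψ.Realize x (xs ∘ Fin.append (fun j => f (ic (j, e0))) (fun k => f (iy k))))) := by
    refine QFDef.or (QFDef.and (QFDef.not (QFDef.all fun e => ?_)) ?_)
      (QFDef.and (QFDef.and ?_ (QFDef.all fun j => QFDef.and ?_ ?_)) (QFDef.map ψ hψ _))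
    · refine (QFDef.poly (o (iz e)) f).congr ?_
      intro K _ _ x xs
      simp [o]
    · refine (QFDef.poly (GG p (fun i => o (ia i)) (fun e => o (iz e))) f).congr ?_
      intro K _ _ x xs
      rw [GG_map]
      simp [o]
    · refine (QFDef.poly (o (iW 0) - o iw) f).congr ?_
      intro K _ _ x xs
      simp [o, sub_eq_zero]
    · refine (QFDef.poly (o (iW j.castSucc) - GG p (fun i => o (ia i)) (fun e => o (ic (j, e)))) f).congr ?_
      intro K _ _ x xs
      rw [map_sub, GG_map]
      simp [o, sub_eq_zero]
    · refine (QFDef.poly (o (iW j.succ) - o (ic (j, e1))) f).congr ?_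
      intro K _ _ x xs
      simp [o, sub_eq_zero]
  obtain ⟨ψ', hq, hr⟩ := main
  refine ⟨s', ψ', hq, ?_⟩
  intro K _ _ _ _ hb v
  obtain ⟨b, hb⟩ := hb
  have hfl : ∀ (t : Fin (n + 1) → K) (ys : Fin s' → K) i,
      Fin.append t ys (f (Sum.inl i)) = t i := by
    intro t ys i
    simp [f]
  have hfr : ∀ (t : Fin (n + 1) → K) (ys : Fin s' → K) i,
      Fin.append t ys (f (Sum.inr i)) = ys (ei i) := by
    intro t ys i
    simp [f]
  have happ : ∀ (g : Fin ((n + 1) + s') → K) (u₁ : Fin r → Fin ((n + 1) + s'))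
      (u₂ : Fin s → Fin ((n + 1) + s')),
      g ∘ Fin.append u₁ u₂ = Fin.append (fun j => g (u₁ j)) (fun k => g (u₂ k)) := by
    intro g u₁ u₂
    funext i
    induction i using Fin.addCases <;> simp
  rw [BoundedFormula.realize_alls, BoundedFormula.realize_alls]
  simp only [my_realize_exsN, hr, happ]
  simp only [ia, iw, iz, iW, ic, iy, hfl, hfr]
  constructor
  · intro H t
    by_cases hi : ∀ c, GG p (fun i => t (Fin.castSucc i)) c = 0 → c = 0
    · have hB := pbasis_of_indep p hp b _ hb hi
      obtain ⟨W, c, h1, h2⟩ := dec_exists p (r := r) e1 _ hB (t (Fin.last n))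
      obtain ⟨y, hy⟩ := H (fun j => c (j, e0))
      refine ⟨fun k => (Sum.elim (fun _ => 0) (Sum.elim W (Sum.elim c y)) : I → K) (ei.symm k),
        Or.inr ?_⟩
      simp only [Equiv.symm_apply_apply, Sum.elim_inl, Sum.elim_inr]
      exact ⟨⟨h2, h1⟩, hy⟩
    · push Not at hi
      obtain ⟨z, hz, hz0⟩ := hi
      refine ⟨fun k => (Sum.elim z (fun _ => 0) : I → K) (ei.symm k), Or.inl ?_⟩
      simp only [Equiv.symm_apply_apply, Sum.elim_inl]
      exact ⟨fun h => hz0 (funext h), hz⟩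
  · intro H x
    obtain ⟨W, c, h1, h2⟩ := enc_exists p e0 e1 h01 b r x
    obtain ⟨ys, h⟩ := H (Fin.snoc b (W 0))
    simp only [Fin.snoc_castSucc, Fin.snoc_last] at h
    rcases h with ⟨h3, h4⟩ | ⟨⟨h3, h4⟩, h5⟩
    · exact absurd (fun e => congrFun (pbasis_indep p hp b hb _ h4) e) h3
    · have hc := dec_unique p e1 b hb _ _ _ _ h1 h4 h3.symm
      have hx : x = fun j => ys (ei (Sum.inr (Sum.inr (Sum.inl (j, e0))))) := by
        funext j
        rw [← h2 j, hc]
      rw [hx]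
      exact ⟨_, h5⟩
end

section
/- Let k₀ be a field and let k and l be field extensions of k₀. Suppose that every existential sentence with parameters from k₀ true in k is true in l; that is, for every existential ring formula φ(v₁,…,v_m) and all c₁,…,c_m ∈ k₀: if k ⊨ φ(c₁,…,c_m) then l ⊨ φ(c₁,…,c_m) (parameters taken via the inclusions k₀ ⊆ k and k₀ ⊆ l). Then for every existential ring formula φ(v₁,…,v_m) and all parameters r₁,…,r_m from the rational function field k₀(t): if k(t) ⊨ φ(r₁,…,r_m) then l(t) ⊨ φ(r₁,…,r_m), where k₀(t) is mapped into k(t) and l(t) by the field embeddings induced by k₀ ⊆ k and k₀ ⊆ l sending t to t. In particular, if every existential ring sentence true in k is true in l, then for every existential ring formula φ(w): k(t) ⊨ φ(t) implies l(t) ⊨ φ(t). -/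
open FirstOrder Language

attribute [local instance] FirstOrder.Ring.compatibleRingOfRing


namespace Stmt9Aux

open Filter

/-- `h` is a partial ring embedding on the set `S`. -/
structure PHom {k l : Type} [Field k] [Field l] (S : Finset k) (h : k → l) : Prop where
  add : ∀ a ∈ S, ∀ b ∈ S, a + b ∈ S → h (a + b) = h a + h b
  mul : ∀ a ∈ S, ∀ b ∈ S, a * b ∈ S → h (a * b) = h a * h b
  inj : ∀ a ∈ S, ∀ b ∈ S, a ≠ b → h a ≠ h b

lemma isQF_iInf {α β : Type} [Finite β] {n : ℕ} (f : β → Language.ring.BoundedFormula α n)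
    (hf : ∀ b, (f b).IsQF) : (BoundedFormula.iInf f).IsQF := by
  have key : ∀ L : List β, ((L.map f).foldr (· ⊓ ·) ⊤).IsQF := by
    intro L
    induction L with
    | nil => exact BoundedFormula.IsQF.top
    | cons a L ih => exact BoundedFormula.IsQF.inf (hf a) ih
  exact key _

lemma exists_phom {k l : Type} [Field k] [Field l] {α : Type} [Finite α] (v : α → k) (w : α → l)
    (H : ∀ (s : ℕ) (φ : Language.ring.BoundedFormula α s), φ.IsQF →
      (φ.exs : Language.ring.Formula _).Realize v → (φ.exs : Language.ring.Formula _).Realize w)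
    (S : Finset k) : ∃ h : k → l, PHom S h ∧ ∀ p, v p ∈ S → h (v p) = w p := by
  classical
  let n := S.card
  let e : S ≃ Fin n := S.equivFin
  let y : Fin n → k := fun i => (e.symm i : k)
  let V : Fin n → Language.ring.Term (α ⊕ Fin n) := fun i => Term.var (Sum.inr i)
  let fadd : Fin n × Fin n × Fin n → Language.ring.BoundedFormula α n := fun b =>
    if y b.1 + y b.2.1 = y b.2.2 then (V b.1 + V b.2.1).bdEqual (V b.2.2) else ⊤
  let fmul : Fin n × Fin n × Fin n → Language.ring.BoundedFormula α n := fun b =>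
    if y b.1 * y b.2.1 = y b.2.2 then (V b.1 * V b.2.1).bdEqual (V b.2.2) else ⊤
  let fne : Fin n × Fin n → Language.ring.BoundedFormula α n := fun b =>
    if y b.1 ≠ y b.2 then ((V b.1).bdEqual (V b.2)).not else ⊤
  let fpar : Fin n × α → Language.ring.BoundedFormula α n := fun b =>
    if y b.1 = v b.2 then (V b.1).bdEqual (Term.var (Sum.inl b.2)) else ⊤
  have qeq : ∀ t₁ t₂ : Language.ring.Term (α ⊕ Fin n), (t₁.bdEqual t₂).IsQF := fun t₁ t₂ =>
    BoundedFormula.IsQF.of_isAtomic (BoundedFormula.IsAtomic.equal t₁ t₂)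
  let φ := (BoundedFormula.iInf fadd ⊓ BoundedFormula.iInf fmul) ⊓
    (BoundedFormula.iInf fne ⊓ BoundedFormula.iInf fpar)
  have hφ : φ.IsQF := by
    refine ((isQF_iInf _ ?_).inf (isQF_iInf _ ?_)).inf ((isQF_iInf _ ?_).inf (isQF_iInf _ ?_))
    · intro b; simp only [fadd]; split_ifs; exacts [qeq _ _, BoundedFormula.IsQF.top]
    · intro b; simp only [fmul]; split_ifs; exacts [qeq _ _, BoundedFormula.IsQF.top]
    · intro b; simp only [fne]; split_ifs; exacts [(qeq _ _).not, BoundedFormula.IsQF.top]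
    · intro b; simp only [fpar]; split_ifs; exacts [qeq _ _, BoundedFormula.IsQF.top]
  have hk : (φ.exs : Language.ring.Formula _).Realize v := by
    rw [BoundedFormula.realize_exs]
    refine ⟨y, ?_⟩
    simp only [φ, BoundedFormula.realize_inf, BoundedFormula.realize_iInf]
    refine ⟨⟨?_, ?_⟩, ?_, ?_⟩
    · intro b; simp only [fadd]; split_ifs with hb
      · simpa [V] using hb
      · simp
    · intro b; simp only [fmul]; split_ifs with hb
      · simpa [V] using hb
      · simp
    · intro b; simp only [fne]; split_ifs with hb
      · simpa [V] using hb
      · simp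
    · intro b; simp only [fpar]; split_ifs with hb
      · simpa [V] using hb
      · simp
  have hl := H n φ hφ hk
  rw [BoundedFormula.realize_exs] at hl
  obtain ⟨z, hz⟩ := hl
  simp only [φ, BoundedFormula.realize_inf, BoundedFormula.realize_iInf] at hz
  obtain ⟨⟨h1, h2⟩, h3, h4⟩ := hz
  have hy : ∀ a (ha : a ∈ S), y (e ⟨a, ha⟩) = a := by intro a ha; simp [y]
  refine ⟨fun a => if ha : a ∈ S then z (e ⟨a, ha⟩) else 0, ⟨?_, ?_, ?_⟩, ?_⟩
  · intro a ha b hb hab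
    have := h1 (e ⟨a, ha⟩, e ⟨b, hb⟩, e ⟨a + b, hab⟩)
    simp only [fadd, hy, if_true] at this
    simp only [ha, hb, hab, dif_pos]
    simpa [V] using this.symm
  · intro a ha b hb hab
    have := h2 (e ⟨a, ha⟩, e ⟨b, hb⟩, e ⟨a * b, hab⟩)
    simp only [fmul, hy, if_true] at this
    simp only [ha, hb, hab, dif_pos]
    simpa [V] using this.symm
  · intro a ha b hb hab
    have := h3 (e ⟨a, ha⟩, e ⟨b, hb⟩)
    simp only [fne, hy, if_pos hab] at this
    simp only [ha, hb, dif_pos]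
    simpa [V] using this
  · intro p hp
    have := h4 (e ⟨v p, hp⟩, p)
    simp only [fpar, hy, if_true] at this
    simp only [hp, dif_pos]
    simpa [V] using this

/-- The embedding of `k(t)` into the ultrapower of `l(t)`. -/
lemma exists_embedding {k l : Type} [Field k] [Field l] (h : Finset k → k → l)
    (hh : ∀ S, PHom S (h S)) :
    ∃ (U : Ultrafilter (Finset k)) (Φ : RatFunc k →+* Germ (U : Filter (Finset k)) (RatFunc l)),
      (U : Filter (Finset k)) ≤ atTop ∧
      Φ RatFunc.X = ((fun _ => RatFunc.X : Finset k → RatFunc l) : Germ _ _) ∧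
      ∀ a, Φ (RatFunc.C a) = ((fun S => RatFunc.C (h S a) : Finset k → RatFunc l) : Germ _ _) := by
  classical
  let U : Ultrafilter (Finset k) := Ultrafilter.of atTop
  have hU : (U : Filter (Finset k)) ≤ atTop := Ultrafilter.of_le _
  have mem : ∀ a : k, ∀ᶠ S in (U : Filter (Finset k)), a ∈ S := fun a =>
    hU ((eventually_ge_atTop {a}).mono fun S hS => hS (Finset.mem_singleton_self a))
  let g : k → Germ (U : Filter (Finset k)) (RatFunc l) := fun a =>
    ((fun S => RatFunc.C (h S a) : Finset k → RatFunc l) : Germ _ _)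
  have gadd : ∀ a b, g (a + b) = g a + g b := by
    intro a b
    refine Germ.coe_eq.2 ?_
    filter_upwards [mem a, mem b, mem (a + b)] with S h1 h2 h3
    simp [(hh S).add a h1 b h2 h3]
  have gmul : ∀ a b, g (a * b) = g a * g b := by
    intro a b
    refine Germ.coe_eq.2 ?_
    filter_upwards [mem a, mem b, mem (a * b)] with S h1 h2 h3
    simp [(hh S).mul a h1 b h2 h3]
  have ginj : ∀ a b, a ≠ b → g a ≠ g b := by
    intro a b hab hg
    have := Germ.coe_eq.1 hg
    obtain ⟨S, h1, h2, h3⟩ := ((mem a).and ((mem b).and this)).exists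
    exact (hh S).inj a h1 b h2 hab (RatFunc.C_injective h3)
  have g0 : g 0 = 0 := by
    have := gadd 0 0
    simpa using this
  have g1 : g 1 = 1 := by
    have := gmul 1 1
    have h1 : g 1 ≠ 0 := g0 ▸ ginj 1 0 one_ne_zero
    rw [mul_one] at this
    exact (mul_left_cancel₀ h1 (by rw [← this, mul_one])).symm
  let G : k →+* Germ (U : Filter (Finset k)) (RatFunc l) :=
    { toFun := g, map_zero' := g0, map_one' := g1, map_add' := gadd, map_mul' := gmul }
  let X' : Germ (U : Filter (Finset k)) (RatFunc l) :=
    ((fun _ => RatFunc.X : Finset k → RatFunc l) : Germ _ _)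
  let Ψ : Polynomial k →+* Germ (U : Filter (Finset k)) (RatFunc l) := Polynomial.eval₂RingHom G X'
  let c := Germ.coeRingHom (R := RatFunc l) (U : Filter (Finset k))
  have hΨ : ∀ p : Polynomial k, Ψ p = c (fun S => algebraMap (Polynomial l) (RatFunc l)
      (∑ i ∈ p.support, Polynomial.C (h S (p.coeff i)) * Polynomial.X ^ i)) := by
    intro p
    have e1 : (fun S => algebraMap (Polynomial l) (RatFunc l)
      (∑ i ∈ p.support, Polynomial.C (h S (p.coeff i)) * Polynomial.X ^ i)) =
      ∑ i ∈ p.support, (fun S => RatFunc.C (h S (p.coeff i)) : Finset k → RatFunc l) *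
        (fun _ => RatFunc.X) ^ i := by
      funext S
      simp [Finset.sum_apply]
    rw [e1, map_sum]
    simp only [map_mul, map_pow]
    change Polynomial.eval₂ G X' p = _
    rw [Polynomial.eval₂_eq_sum, Polynomial.sum]
    rfl
  have hinj : Function.Injective Ψ := by
    rw [injective_iff_map_eq_zero]
    intro p hp
    by_contra hne
    rw [hΨ] at hp
    have hev : ∀ᶠ S in (U : Filter (Finset k)), algebraMap (Polynomial l) (RatFunc l)
      (∑ i ∈ p.support, Polynomial.C (h S (p.coeff i)) * Polynomial.X ^ i) = 0 :=
      Germ.coe_eq.1 hp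
    have hlead : g p.leadingCoeff = 0 := by
      refine Germ.coe_eq.2 ?_
      filter_upwards [hev] with S hS
      have h0 := (map_eq_zero_iff _ (RatFunc.algebraMap_injective l)).1 hS
      have h1 := congrArg (fun q => Polynomial.coeff q p.natDegree) h0
      simp only [Polynomial.finsetSum_coeff, Polynomial.coeff_C_mul_X_pow,
        Polynomial.coeff_zero] at h1
      rw [Finset.sum_ite_eq, if_pos (Polynomial.natDegree_mem_support_of_nonzero hne)] at h1
      have h2 : h S p.leadingCoeff = 0 := h1
      simp [h2]
    exact ginj _ 0 (Polynomial.leadingCoeff_ne_zero.2 hne) (hlead.trans g0.symm)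
  have hle := nonZeroDivisors_le_comap_nonZeroDivisors_of_injective Ψ hinj
  refine ⟨U, RatFunc.liftRingHom Ψ hle, hU, ?_, ?_⟩
  · have := RatFunc.liftRingHom_apply_div Ψ hle Polynomial.X 1
    rw [map_one, map_one, div_one, div_one, RatFunc.algebraMap_X] at this
    rw [this]
    exact Polynomial.eval₂_X _ _
  · intro a
    have := RatFunc.liftRingHom_apply_div Ψ hle (Polynomial.C a) 1
    rw [map_one, map_one, div_one, div_one, RatFunc.algebraMap_C] at this
    rw [this]
    exact Polynomial.eval₂_C _ _

lemma term_transfer {K L ι : Type} [Field K] [Field L] (U : Ultrafilter ι)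
    (Φ : K →+* Germ (U : Filter ι) L) {β : Type} (x : β → K) (z : ι → β → L)
    (hz : ∀ b, Φ (x b) = ((fun i => z i b : ι → L) : Germ _ _)) (t : Language.ring.Term β) :
    Φ (t.realize x) = ((fun i => t.realize (z i) : ι → L) : Germ _ _) := by
  induction t with
  | var b => exact hz b
  | func f ts ih =>
    cases f with
    | add =>
      exact (map_add Φ ((ts 0).realize x) ((ts 1).realize x)).trans (by rw [ih, ih]; rfl)
    | mul =>
      exact (map_mul Φ ((ts 0).realize x) ((ts 1).realize x)).trans (by rw [ih, ih]; rfl)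
    | neg =>
      exact (map_neg Φ ((ts 0).realize x)).trans (by rw [ih]; rfl)
    | zero => exact map_zero Φ
    | one => exact map_one Φ

lemma qf_transfer {K L ι : Type} [Field K] [Field L] (U : Ultrafilter ι)
    (Φ : K →+* Germ (U : Filter ι) L) {α : Type} {s : ℕ} (u : α → K) (u' : α → L)
    (hu : ∀ a, Φ (u a) = ((fun _ => u' a : ι → L) : Germ _ _))
    (y : Fin s → K) (z : ι → Fin s → L)
    (hz : ∀ b, Φ (y b) = ((fun i => z i b : ι → L) : Germ _ _))
    (φ : Language.ring.BoundedFormula α s) (hφ : φ.IsQF) :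
    φ.Realize u y ↔ ∀ᶠ i in (U : Filter ι), φ.Realize u' (z i) := by
  induction hφ with
  | falsum => simpa [BoundedFormula.Realize] using U.neBot.ne
  | of_isAtomic h =>
    cases h with
    | equal t₁ t₂ =>
      simp only [BoundedFormula.realize_bdEqual]
      have key := term_transfer U Φ (Sum.elim u y) (fun i => Sum.elim u' (z i))
        (by rintro (a | b); exacts [hu a, hz b])
      rw [← Φ.injective.eq_iff, key, key, Germ.coe_eq]
      rfl
    | rel R ts => exact isEmptyElim R
  | imp _ _ ih1 ih2 =>
    simp only [BoundedFormula.realize_imp, ih1, ih2, Ultrafilter.eventually_imp]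

lemma exs_transfer {K L ι : Type} [Field K] [Field L] (U : Ultrafilter ι)
    (Φ : K →+* Germ (U : Filter ι) L) {α : Type} {s : ℕ} (u : α → K) (u' : α → L)
    (hu : ∀ a, Φ (u a) = ((fun _ => u' a : ι → L) : Germ _ _))
    (φ : Language.ring.BoundedFormula α s) (hφ : φ.IsQF)
    (h : (φ.exs : Language.ring.Formula _).Realize u) :
    (φ.exs : Language.ring.Formula _).Realize u' := by
  rw [BoundedFormula.realize_exs] at h ⊢
  obtain ⟨y, hy⟩ := h
  have hex : ∀ b, ∃ f : ι → L, Φ (y b) = (f : Germ (U : Filter ι) L) := fun b =>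
    Quotient.inductionOn' (Φ (y b)) fun f => ⟨f, rfl⟩
  choose f hf using hex
  obtain ⟨i, hi⟩ := ((qf_transfer U Φ u u' hu y (fun i b => f b i) hf φ hφ).1 hy).exists
  exact ⟨_, hi⟩

end Stmt9Aux

/-- let `k, l` be field extensions of `k₀`.  (Main part) If every existential ring
sentence with parameters from `k₀` true in `k` is true in `l`, then every existential ring
sentence with parameters from `k₀(t)` true in `k(t)` is true in `l(t)`, where `k₀(t)` is mapped
into `k(t)` and `l(t)` by the embeddings sending `t ↦ t` and acting as `algebraMap` on constants.
(In particular) If every existential ring sentence true in `k` is true in `l`, then for every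
existential ring formula `φ(w)`: `k(t) ⊨ φ(t)` implies `l(t) ⊨ φ(t)`. -/
theorem stmt9 (k₀ k l : Type) [Field k₀] [Field k] [Field l]
    [Algebra k₀ k] [Algebra k₀ l] :
    ((∀ (m s : ℕ) (φ : Language.ring.BoundedFormula (Fin m) s), φ.IsQF →
        ∀ c : Fin m → k₀,
          (φ.exs : Language.ring.Formula _).Realize (fun i => algebraMap k₀ k (c i)) →
          (φ.exs : Language.ring.Formula _).Realize (fun i => algebraMap k₀ l (c i))) →
      ∀ (ek : RatFunc k₀ →+* RatFunc k) (el : RatFunc k₀ →+* RatFunc l),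
        ek RatFunc.X = RatFunc.X → el RatFunc.X = RatFunc.X →
        (∀ c : k₀, ek (RatFunc.C c) = RatFunc.C (algebraMap k₀ k c)) →
        (∀ c : k₀, el (RatFunc.C c) = RatFunc.C (algebraMap k₀ l c)) →
        ∀ (m s : ℕ) (φ : Language.ring.BoundedFormula (Fin m) s), φ.IsQF →
          ∀ r : Fin m → RatFunc k₀,
            (φ.exs : Language.ring.Formula _).Realize (fun i => ek (r i)) →
            (φ.exs : Language.ring.Formula _).Realize (fun i => el (r i))) ∧
    ((∀ (s : ℕ) (φ : Language.ring.BoundedFormula Empty s), φ.IsQF →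
        k ⊨ (φ.exs : Language.ring.Sentence) → l ⊨ (φ.exs : Language.ring.Sentence)) →
      ∀ (s : ℕ) (φ : Language.ring.BoundedFormula Unit s), φ.IsQF →
        (φ.exs : Language.ring.Formula _).Realize (fun _ : Unit => (RatFunc.X : RatFunc k)) →
        (φ.exs : Language.ring.Formula _).Realize (fun _ : Unit => (RatFunc.X : RatFunc l))) := by
  constructor
  · intro H ek el hekX helX hek hel m s φ hφ r hr
    have hS : ∀ S : Finset k, ∃ h : k → l, Stmt9Aux.PHom S h ∧
        ∀ c : k₀, algebraMap k₀ k c ∈ S → h (algebraMap k₀ k c) = algebraMap k₀ l c := by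
      intro S
      classical
      let T : Finset k₀ := S.preimage (algebraMap k₀ k) (algebraMap k₀ k).injective.injOn
      let c : Fin T.card → k₀ := fun i => (T.equivFin.symm i : k₀)
      obtain ⟨h, h1, h2⟩ := Stmt9Aux.exists_phom (fun i => algebraMap k₀ k (c i))
        (fun i => algebraMap k₀ l (c i)) (fun s φ hφ => H _ s φ hφ c) S
      refine ⟨h, h1, fun a ha => ?_⟩
      have haT : a ∈ T := Finset.mem_preimage.2 ha
      have hc : c (T.equivFin ⟨a, haT⟩) = a := by simp [c]
      have := h2 (T.equivFin ⟨a, haT⟩)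
      simp only [hc] at this
      exact this ha
    choose h h1 h2 using hS
    obtain ⟨U, Φ, hU, hX, hC⟩ := Stmt9Aux.exists_embedding h h1
    refine Stmt9Aux.exs_transfer U Φ (fun i => ek (r i)) (fun i => el (r i)) ?_ φ hφ hr
    let c : RatFunc l →+* Filter.Germ (U : Filter (Finset k)) (RatFunc l) :=
      (Filter.Germ.coeRingHom (R := RatFunc l) (U : Filter (Finset k))).comp
        (Pi.constRingHom (Finset k) (RatFunc l))
    have heq : Φ.comp ek = c.comp el := by
      refine IsLocalization.ringHom_ext (nonZeroDivisors (Polynomial k₀)) ?_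
      refine Polynomial.ringHom_ext ?_ ?_
      · intro a
        simp only [RingHom.comp_apply, RatFunc.algebraMap_C, hek, hel, hC]
        refine Filter.Germ.coe_eq.2 ?_
        have : ∀ᶠ S in (U : Filter (Finset k)), algebraMap k₀ k a ∈ S :=
          hU ((Filter.eventually_ge_atTop {algebraMap k₀ k a}).mono
            fun S hS => hS (Finset.mem_singleton_self _))
        filter_upwards [this] with S hS
        rw [h2 S a hS]
        rfl
      · simp only [RingHom.comp_apply, RatFunc.algebraMap_X, hekX, helX, hX]
        rfl
    intro i
    exact RingHom.congr_fun heq (r i)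
  · intro H s φ hφ hr
    have hS : ∀ S : Finset k, ∃ h : k → l, Stmt9Aux.PHom S h := by
      intro S
      obtain ⟨h, h1, -⟩ := Stmt9Aux.exists_phom (default : Empty → k) (default : Empty → l)
        (fun s φ hφ => H s φ hφ) S
      exact ⟨h, h1⟩
    choose h h1 using hS
    obtain ⟨U, Φ, hU, hX, hC⟩ := Stmt9Aux.exists_embedding h h1
    exact Stmt9Aux.exs_transfer U Φ _ _ (fun _ => hX) φ hφ hr
end

section
/- Let k ⊆ k' be a field extension such that k is existentially closed in k', i.e., for every quantifier-free ring formula ψ(y₁,…,yₛ,v₁,…,v_m) and all a₁,…,a_m ∈ k: if k' ⊨ ∃y⃗ ψ(y⃗, a⃗) then k ⊨ ∃y⃗ ψ(y⃗, a⃗). Then Th_{∀₁∃}(k(t)) = Th_{∀₁∃}(k'(t)); that is, for every quantifier-free ring formula ψ, the sentence ∀x ∃y₁…∃yₛ ψ is true in the rational function field k(t) if and only if it is true in k'(t). -/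
open FirstOrder Language

attribute [local instance] FirstOrder.Ring.compatibleRingOfRing

open Polynomial in
noncomputable def jmap (k k' : Type) [Field k] [Field k'] [Algebra k k'] :
    RatFunc k →+* RatFunc k' :=
  RatFunc.mapRingHom (Polynomial.mapRingHom (algebraMap k k'))
    (nonZeroDivisors_le_comap_nonZeroDivisors_of_injective _
      (Polynomial.map_injective _ (algebraMap k k').injective))

lemma jmap_div (k k' : Type) [Field k] [Field k'] [Algebra k k'] (p q : Polynomial k) :
    jmap k k' (algebraMap _ _ p / algebraMap _ _ q) =
      algebraMap _ _ (p.map (algebraMap k k')) / algebraMap _ _ (q.map (algebraMap k k')) := by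
  unfold jmap
  rw [RatFunc.coe_mapRingHom_eq_coe_map, RatFunc.map_apply_div]
  simp

lemma jmap_alg (k k' : Type) [Field k] [Field k'] [Algebra k k'] (p : Polynomial k) :
    jmap k k' (algebraMap _ _ p) = algebraMap _ _ (p.map (algebraMap k k')) := by
  simpa using jmap_div k k' p 1

lemma term_hom {R S : Type} [CommRing R] [CommRing S] (f : R →+* S) {α : Type}
    (v : α → R) (t : Language.ring.Term α) : t.realize (fun a => f (v a)) = f (t.realize v) := by
  induction t with
  | var a => rfl
  | func g ts ih =>
    cases g <;>
    simp only [Term.realize, ih]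
    · exact (map_add f _ _).symm
    · exact (map_mul f _ _).symm
    · exact (map_neg f _).symm
    · exact (map_zero f).symm
    · exact (map_one f).symm

lemma qf_spread {K L : Type} [Field K] [Field L] {n : ℕ} (ψ : Language.ring.BoundedFormula Empty n)
    (h : ψ.IsQF) (v : Fin n → L) :
    ∃ S : Finset L, ∀ (B : Type) (_ : CommRing B) (i : B →+* L) (φ : B →+* K)
      (_ : Function.Injective i) (_ : ∀ s ∈ S, ∃ b, i b = s) (w : Fin n → B)
      (_ : ∀ a, i (w a) = v a), (ψ.Realize default v ↔ ψ.Realize default (fun a => φ (w a))) := by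
  classical
  induction h with
  | falsum => exact ⟨∅, fun _ _ _ _ _ _ _ _ => Iff.rfl⟩
  | of_isAtomic h =>
    cases h with
    | rel R ts => cases R
    | equal t₁ t₂ =>
      refine ⟨{(t₁.realize (Sum.elim default v) - t₂.realize (Sum.elim default v))⁻¹}, ?_⟩
      intro B _ i φ hi hS w hw
      obtain ⟨b, hb⟩ := hS _ (Finset.mem_singleton_self _)
      have e1 : (Sum.elim default v : Empty ⊕ Fin n → L) =
          fun a => i ((Sum.elim (fun e : Empty => e.elim) w : Empty ⊕ Fin n → B) a) := by
        funext a
        rcases a with a | a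
        · exact a.elim
        · exact (hw a).symm
      have e2 : (Sum.elim default (fun a => φ (w a)) : Empty ⊕ Fin n → K) =
          fun a => φ ((Sum.elim (fun e : Empty => e.elim) w : Empty ⊕ Fin n → B) a) := by
        funext a
        rcases a with a | a
        · exact a.elim
        · rfl
      rw [BoundedFormula.realize_bdEqual, BoundedFormula.realize_bdEqual, e2]
      rw [e1] at hb ⊢
      simp only [term_hom] at hb ⊢
      set u := t₁.realize (Sum.elim (fun e : Empty => e.elim) w : Empty ⊕ Fin n → B)
      set u' := t₂.realize (Sum.elim (fun e : Empty => e.elim) w : Empty ⊕ Fin n → B)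
      constructor
      · intro h; rw [hi h]
      · intro h
        by_contra hne
        have : b * (u - u') = 1 := by
          apply hi
          rw [map_mul, hb, map_sub, map_one, inv_mul_cancel₀ (sub_ne_zero.2 hne)]
        have := congrArg φ this
        simp [h] at this
  | imp h₁ h₂ ih₁ ih₂ =>
    obtain ⟨S₁, h₁⟩ := ih₁
    obtain ⟨S₂, h₂⟩ := ih₂
    refine ⟨S₁ ∪ S₂, fun B _ i φ hi hS w hw => ?_⟩
    rw [BoundedFormula.realize_imp, BoundedFormula.realize_imp,
      h₁ B _ i φ hi (fun s hs => hS s (Finset.mem_union_left _ hs)) w hw,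
      h₂ B _ i φ hi (fun s hs => hS s (Finset.mem_union_right _ hs)) w hw]

lemma qf_hom {K L : Type} [Field K] [Field L] {n : ℕ} (ψ : Language.ring.BoundedFormula Empty n)
    (h : ψ.IsQF) (f : K →+* L) (v : Fin n → K) (hv : ψ.Realize default v) :
    ψ.Realize default (fun a => f (v a)) := by
  obtain ⟨S, hS⟩ := qf_spread (K := L) ψ h v
  exact (hS K _ (RingHom.id K) f Function.injective_id (fun s _ => ⟨s, rfl⟩) v
    (fun _ => rfl)).1 hv

lemma exsN_realize {M : Type} [Language.ring.Structure M] {m : ℕ} :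
    ∀ {s : ℕ} (ψ : Language.ring.BoundedFormula Empty (m + s)) (v : Empty → M) (xs : Fin m → M),
    ψ.exsN.Realize v xs ↔
      ∃ zs : Fin (m + s) → M, (∀ i, zs (Fin.castAdd s i) = xs i) ∧ ψ.Realize v zs
  | 0, ψ, v, xs => by
    constructor
    · intro h; exact ⟨xs, fun i => rfl, h⟩
    · rintro ⟨zs, h1, h2⟩
      have : zs = xs := funext h1
      rw [← this]; exact h2
  | s + 1, ψ, v, xs => by
    change (BoundedFormula.exsN (BoundedFormula.ex ψ)).Realize v xs ↔ _
    rw [exsN_realize (s := s)]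
    constructor
    · rintro ⟨zs, h1, h2⟩
      rw [BoundedFormula.realize_ex] at h2
      obtain ⟨a, h2⟩ := h2
      refine ⟨Fin.snoc zs a, fun i => ?_, h2⟩
      rw [← h1 i]
      exact Fin.snoc_castSucc (α := fun _ => M) a zs (Fin.castAdd s i)
    · rintro ⟨zs, h1, h2⟩
      refine ⟨fun i => zs i.castSucc, fun i => h1 i, ?_⟩
      rw [BoundedFormula.realize_ex]
      refine ⟨zs (Fin.last _), ?_⟩
      have : (Fin.snoc (fun i => zs i.castSucc) (zs (Fin.last _)) : Fin (m + s + 1) → M) = zs :=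
        Fin.snoc_init_self zs
      rw [this]; exact h2

lemma sent_iff {M : Type} [Language.ring.Structure M] {s : ℕ}
    (ψ : Language.ring.BoundedFormula Empty (1 + s)) :
    M ⊨ (ψ.exsN.alls : Language.ring.Sentence) ↔
      ∀ x : M, ∃ zs : Fin (1 + s) → M, zs (Fin.castAdd s 0) = x ∧ ψ.Realize default zs := by
  unfold Sentence.Realize
  rw [BoundedFormula.realize_alls]
  simp only [exsN_realize]
  constructor
  · intro h x
    obtain ⟨zs, h1, h2⟩ := h (fun _ => x)
    exact ⟨zs, h1 0, h2⟩
  · intro h xs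
    obtain ⟨zs, h1, h2⟩ := h (xs 0)
    refine ⟨zs, fun i => ?_, h2⟩
    rw [Subsingleton.elim i 0]; exact h1

/-- every finite set of polynomials with common zero in `k'` has a common zero in `k`. -/
lemma common_zero (k k' : Type) [Field k] [Field k'] [Algebra k k']
    (hec : ∀ (m s : ℕ) (ψ : Language.ring.BoundedFormula (Fin m) s), ψ.IsQF →
      ∀ a : Fin m → k,
        (ψ.exs : Language.ring.Formula _).Realize (fun i => algebraMap k k' (a i)) →
        (ψ.exs : Language.ring.Formula _).Realize a) (s : ℕ)
    (G : Finset (MvPolynomial (Fin s) k)) (y : Fin s → k')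
    (hy : ∀ g ∈ G, MvPolynomial.aeval y g = 0) :
    ∃ z : Fin s → k, ∀ g ∈ G, MvPolynomial.aeval z g = 0 := by
  classical
  let C : Finset k := G.biUnion fun g => g.support.image fun d => g.coeff d
  let e := C.equivFin
  let a : Fin C.card → k := fun i => (e.symm i : k)
  let F : FreeCommRing (Fin C.card ⊕ Fin s) →+* MvPolynomial (Fin s) k :=
    FreeCommRing.lift (Sum.elim (fun i => MvPolynomial.C (a i)) MvPolynomial.X)
  have hF : ∀ g ∈ G, ∃ p, F p = g := by
    intro g hg
    change g ∈ F.range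
    rw [g.as_sum]
    refine Subring.sum_mem _ fun d hd => ?_
    rw [MvPolynomial.monomial_eq]
    refine Subring.mul_mem _ ?_ ?_
    · have hc : g.coeff d ∈ C := Finset.mem_biUnion.2 ⟨g, hg, Finset.mem_image_of_mem _ hd⟩
      refine ⟨FreeCommRing.of (Sum.inl (e ⟨_, hc⟩)), ?_⟩
      simp [F, a]
    · refine Subring.prod_mem _ fun i _ => Subring.pow_mem _ (RingHom.mem_range.2 ⟨FreeCommRing.of (Sum.inr i), ?_⟩) _
      simp [F]
  have hreal : ∀ (R : Type) [CommRing R] [Algebra k R] (z : Fin s → R)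
      (p : FreeCommRing (Fin C.card ⊕ Fin s)),
      (FirstOrder.Ring.termOfFreeCommRing p).realize
        (Sum.elim (fun i => algebraMap k R (a i)) z) = MvPolynomial.aeval z (F p) := by
    intro R _ _ z p
    rw [FirstOrder.Ring.realize_termOfFreeCommRing]
    have : FreeCommRing.lift (Sum.elim (fun i => algebraMap k R (a i)) z) =
        ((MvPolynomial.aeval z : MvPolynomial (Fin s) k →ₐ[k] R) :
          MvPolynomial (Fin s) k →+* R).comp F := by
      apply FreeCommRing.hom_ext
      rintro (i | i) <;> simp [F]
    rw [this]; rfl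
  have key : ∀ G' : Finset (MvPolynomial (Fin s) k), G' ⊆ G →
      ∃ ψ : Language.ring.BoundedFormula (Fin C.card) s, ψ.IsQF ∧
        ∀ (R : Type) [CommRing R] [Algebra k R] (z : Fin s → R),
          ψ.Realize (fun i => algebraMap k R (a i)) z ↔
            ∀ g ∈ G', MvPolynomial.aeval z g = 0 := by
    intro G'
    induction G' using Finset.induction_on with
    | empty => exact fun _ => ⟨⊤, BoundedFormula.IsQF.top, by simp⟩
    | insert g G' hg ih =>
      intro hG
      obtain ⟨ψ, hψ, h⟩ := ih ((Finset.subset_insert _ _).trans hG)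
      obtain ⟨p, hp⟩ := hF g (hG (Finset.mem_insert_self _ _))
      refine ⟨(Term.bdEqual (FirstOrder.Ring.termOfFreeCommRing p) 0) ⊓ ψ,
        BoundedFormula.IsQF.inf (BoundedFormula.IsAtomic.equal _ _).isQF hψ, ?_⟩
      intro R _ _ z
      rw [BoundedFormula.realize_inf, h, BoundedFormula.realize_bdEqual, hreal, hp]
      simp
  obtain ⟨ψ, hψ, h⟩ := key G subset_rfl
  have := hec _ s ψ hψ a (by
    rw [BoundedFormula.realize_exs]
    exact ⟨y, (h k' y).2 hy⟩)
  rw [BoundedFormula.realize_exs] at this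
  obtain ⟨z, hz⟩ := this
  exact ⟨z, (h k z).1 hz⟩

lemma exists_hom (k k' : Type) [Field k] [Field k'] [Algebra k k']
    (hec : ∀ (m s : ℕ) (ψ : Language.ring.BoundedFormula (Fin m) s), ψ.IsQF →
      ∀ a : Fin m → k,
        (ψ.exs : Language.ring.Formula _).Realize (fun i => algebraMap k k' (a i)) →
        (ψ.exs : Language.ring.Formula _).Realize a) (T : Finset k') :
    ∃ A : Subalgebra k k', (∀ t ∈ T, t ∈ A) ∧ Nonempty (A →ₐ[k] k) := by
  let e := T.equivFin
  let y : Fin T.card → k' := fun i => (e.symm i : k')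
  let f : MvPolynomial (Fin T.card) k →ₐ[k] k' := MvPolynomial.aeval y
  obtain ⟨G, hG⟩ := (IsNoetherian.noetherian (RingHom.ker f) : (RingHom.ker f).FG)
  obtain ⟨z, hz⟩ := common_zero k k' hec _ G y (fun g hg => by
    have : g ∈ RingHom.ker f := hG ▸ Ideal.subset_span hg
    exact this)
  refine ⟨f.range, ?_, ?_⟩
  · intro t ht
    exact ⟨MvPolynomial.X (e ⟨t, ht⟩), by simp [f, y]⟩
  · have hle : RingHom.ker f ≤ RingHom.ker (MvPolynomial.aeval z : _ →ₐ[k] k) := by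
      rw [← hG]
      exact Ideal.span_le.2 fun g hg => hz g hg
    have e2 := (Ideal.quotientKerEquivRange f).symm
    exact ⟨(Ideal.Quotient.liftₐ (RingHom.ker f) (MvPolynomial.aeval z) (fun g hg => hle hg)).comp
      (e2 : _ →ₐ[k] _)⟩

lemma spread (k k' : Type) [Field k] [Field k'] [Algebra k k']
    (H : ∀ T : Finset k', ∃ A : Subalgebra k k', (∀ t ∈ T, t ∈ A) ∧ Nonempty (A →ₐ[k] k))
    (S : Finset (RatFunc k')) :
    ∃ (B : Type) (_ : CommRing B) (i : B →+* RatFunc k') (φ : B →+* RatFunc k),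
      Function.Injective i ∧ (∀ s ∈ S, ∃ b, i b = s) ∧
      ∀ x, ∃ b, i b = jmap k k' x ∧ φ b = x := by
  classical
  obtain ⟨A, hA, ⟨σ⟩⟩ := H (S.biUnion fun x => x.num.coeffs ∪ x.denom.coeffs)
  let μ : Polynomial A →+* Polynomial k := Polynomial.mapRingHom (σ : A →+* k)
  let ι : Polynomial A →+* Polynomial k' := Polynomial.mapRingHom (algebraMap A k')
  have hι : Function.Injective ι := Polynomial.map_injective _ Subtype.val_injective
  let i₀ : Polynomial A →+* RatFunc k' := (algebraMap _ _ : Polynomial k' →+* RatFunc k').comp ι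
  let φ₀ : Polynomial A →+* RatFunc k := (algebraMap _ _ : Polynomial k →+* RatFunc k).comp μ
  have hi₀ : Function.Injective i₀ := (RatFunc.algebraMap_injective k').comp hι
  let M : Submonoid (Polynomial A) := (nonZeroDivisors (RatFunc k)).comap φ₀
  have hM : ∀ p, p ∈ M ↔ φ₀ p ≠ 0 := fun p => mem_nonZeroDivisors_iff_ne_zero
  have hφu : ∀ p : M, IsUnit (φ₀ p) := fun p => isUnit_iff_ne_zero.2 ((hM _).1 p.2)
  have hiu : ∀ p : M, IsUnit (i₀ p) := fun p => isUnit_iff_ne_zero.2 (fun h0 =>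
    (hM _).1 p.2 (by rw [(map_eq_zero_iff i₀ hi₀).1 h0, map_zero]))
  have hinj : Function.Injective (algebraMap (Polynomial A) (Localization M)) := by
    refine IsLocalization.injective (Localization M) (M := M) fun p hp => mem_nonZeroDivisors_iff_ne_zero.2 ?_
    rintro rfl
    exact (hM _).1 hp (map_zero _)
  refine ⟨Localization M, inferInstance, IsLocalization.lift hiu, IsLocalization.lift hφu,
    ?_, ?_, ?_⟩
  · rw [IsLocalization.lift_injective_iff]
    intro x y
    rw [hinj.eq_iff, hi₀.eq_iff]
  · intro x hx
    have lift : ∀ p : Polynomial k', (∀ c ∈ p.coeffs, c ∈ A) → ∃ q, ι q = p := by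
      intro p hp
      have : p ∈ Polynomial.lifts (algebraMap A k') := by
        rw [Polynomial.lifts_iff_coeff_lifts]
        intro n
        by_cases h0 : p.coeff n = 0
        · exact ⟨0, by rw [h0, map_zero]⟩
        · exact ⟨⟨_, hp _ (Polynomial.coeff_mem_coeffs h0)⟩, rfl⟩
      obtain ⟨q, hq⟩ := (Polynomial.mem_lifts _).1 this
      exact ⟨q, hq⟩
    obtain ⟨p, hp⟩ := lift x.num fun c hc => hA _ (Finset.mem_biUnion.2
      ⟨x, hx, Finset.mem_union_left _ hc⟩)
    obtain ⟨q, hq⟩ := lift x.denom fun c hc => hA _ (Finset.mem_biUnion.2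
      ⟨x, hx, Finset.mem_union_right _ hc⟩)
    have hqm : q.Monic := by
      have h1 : (q.map (algebraMap A k')).Monic := by
        have := x.monic_denom
        rwa [← hq] at this
      exact Polynomial.monic_of_injective Subtype.val_injective h1
    have hqM : q ∈ M := by
      rw [hM]
      have : μ q ≠ 0 := (hqm.map (σ : A →+* k)).ne_zero
      exact fun h0 => this ((map_eq_zero_iff _ (RatFunc.algebraMap_injective k)).1 h0)
    refine ⟨IsLocalization.mk' _ p ⟨q, hqM⟩, ?_⟩
    rw [IsLocalization.lift_mk'_spec]
    change algebraMap _ _ (ι p) = algebraMap _ _ (ι q) * x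
    rw [hp, hq]
    rw [mul_comm, ← div_eq_iff (RatFunc.algebraMap_ne_zero x.denom_ne_zero),
      RatFunc.num_div_denom]
  · intro x
    let τ : Polynomial k →+* Polynomial A := Polynomial.mapRingHom (algebraMap k A)
    have hμ : ∀ p, μ (τ p) = p := by
      intro p
      simp only [μ, τ, Polynomial.coe_mapRingHom, Polynomial.map_map]
      convert Polynomial.map_id
      ext c
      simp
    have hιτ : ∀ p, ι (τ p) = p.map (algebraMap k k') := by
      intro p
      simp only [ι, τ, Polynomial.coe_mapRingHom, Polynomial.map_map]
      rfl
    have hden : algebraMap _ (RatFunc k) x.denom ≠ 0 := RatFunc.algebraMap_ne_zero x.denom_ne_zero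
    have hqM : τ x.denom ∈ M := by
      rw [hM]
      change algebraMap _ _ (μ _) ≠ _
      rwa [hμ]
    refine ⟨IsLocalization.mk' _ (τ x.num) ⟨τ x.denom, hqM⟩, ?_, ?_⟩
    · rw [IsLocalization.lift_mk'_spec]
      change algebraMap _ _ (ι _) = algebraMap _ _ (ι _) * _
      rw [hιτ, hιτ, ← jmap_alg, ← jmap_alg, ← map_mul]
      congr 1
      rw [mul_comm, ← div_eq_iff hden, RatFunc.num_div_denom]
    · rw [IsLocalization.lift_mk'_spec]
      change algebraMap _ _ (μ _) = algebraMap _ _ (μ _) * _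
      rw [hμ, hμ, mul_comm, ← div_eq_iff hden, RatFunc.num_div_denom]

lemma alg_mem (k k' : Type) [Field k] [Field k'] [Algebra k k']
    (H : ∀ T : Finset k', ∃ A : Subalgebra k k', (∀ t ∈ T, t ∈ A) ∧ Nonempty (A →ₐ[k] k))
    (c : k') (hc : IsAlgebraic k c) : ∃ a, algebraMap k k' a = c := by
  obtain ⟨A, hA, ⟨σ⟩⟩ := H {c}
  have hcA : c ∈ A := hA c (by simp)
  have hroot : (minpoly k c).eval (σ ⟨c, hcA⟩) = 0 := by
    have h1 : Polynomial.aeval (⟨c, hcA⟩ : A) (minpoly k c) = 0 := by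
      apply Subtype.val_injective
      have := Polynomial.aeval_algHom_apply A.val (⟨c, hcA⟩ : A) (minpoly k c)
      change A.val _ = A.val 0
      rw [← this, map_zero]
      exact minpoly.aeval k c
    have h2 := Polynomial.aeval_algHom_apply σ (⟨c, hcA⟩ : A) (minpoly k c)
    rw [h1, map_zero] at h2
    simpa using h2
  have hdeg := Polynomial.degree_eq_one_of_irreducible_of_root
    (minpoly.irreducible hc.isIntegral) hroot
  exact minpoly.mem_range_of_degree_eq_one k c hdeg

/-- if `k ⊆ k'` is a field extension with `k` existentially closed in `k'`, then
`Th_{∀₁∃}(k(t)) = Th_{∀₁∃}(k'(t))`: for every quantifier-free ring formula `ψ`, the sentence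
`∀ x ∃ y₁ … yₛ ψ` holds in the rational function field `k(t)` iff it holds in `k'(t)`. -/
theorem stmt10 (k k' : Type) [Field k] [Field k'] [Algebra k k']
    (hec : ∀ (m s : ℕ) (ψ : Language.ring.BoundedFormula (Fin m) s), ψ.IsQF →
      ∀ a : Fin m → k,
        (ψ.exs : Language.ring.Formula _).Realize (fun i => algebraMap k k' (a i)) →
        (ψ.exs : Language.ring.Formula _).Realize a) :
    ∀ (s : ℕ) (ψ : Language.ring.BoundedFormula Empty (1 + s)), ψ.IsQF →
      (RatFunc k ⊨ (ψ.exsN.alls : Language.ring.Sentence) ↔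
        RatFunc k' ⊨ (ψ.exsN.alls : Language.ring.Sentence)) := by
  classical
  intro s ψ hψ
  have H := exists_hom k k' hec
  rw [sent_iff, sent_iff]
  constructor
  · intro h x
    suffices ∃ (f : RatFunc k →+* RatFunc k') (x₀ : RatFunc k), f x₀ = x by
      obtain ⟨f, x₀, hx⟩ := this
      obtain ⟨zs, h1, h2⟩ := h x₀
      exact ⟨fun a => f (zs a), by beta_reduce; rw [h1, hx], qf_hom ψ hψ f zs h2⟩
    by_cases hx : IsAlgebraic k x
    · by_cases hC : ∃ c, x = RatFunc.C c
      · obtain ⟨c, rfl⟩ := hC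
        have hc : IsAlgebraic k c := by
          rw [← RatFunc.algebraMap_eq_C] at hx
          exact (isAlgebraic_algebraMap_iff (algebraMap k' (RatFunc k')).injective).1 hx
        obtain ⟨a, rfl⟩ := alg_mem k k' H c hc
        refine ⟨jmap k k', RatFunc.C a, ?_⟩
        rw [← RatFunc.algebraMap_C, jmap_alg, Polynomial.map_C, RatFunc.algebraMap_C]
      · exact absurd (hx.tower_top k') (x.transcendental_of_ne_C hC)
    · refine ⟨((algebraMap (IntermediateField.adjoin k {x}) (RatFunc k'))).comp
        (RatFunc.algEquivOfTranscendental x hx : RatFunc k →+* _), RatFunc.X, ?_⟩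
      have := RatFunc.algEquivOfTranscendental_X x hx
      simpa using this
  · intro h x
    obtain ⟨zs, h1, h2⟩ := h (jmap k k' x)
    obtain ⟨S, hS⟩ := qf_spread (K := RatFunc k) ψ hψ zs
    obtain ⟨B, _, i, φ, hi, hB, hx⟩ := spread k k' H (S ∪ Finset.univ.image zs)
    have hw : ∀ a, ∃ b, i b = zs a := fun a =>
      hB _ (Finset.mem_union_right _ (Finset.mem_image_of_mem _ (Finset.mem_univ _)))
    choose w hw using hw
    refine ⟨fun a => φ (w a), ?_, (hS B _ i φ hi
      (fun s hs => hB s (Finset.mem_union_left _ hs)) w hw).1 h2⟩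
    obtain ⟨b, hb1, hb2⟩ := hx x
    have : w (Fin.castAdd s 0) = b := hi (by rw [hw, h1, hb1])
    beta_reduce
    rw [this, hb2]
end
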